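/- Let ρ^{ABCD} be a state of a quadripartite quantum system on finite-dimensional Hilbert spaces such that S(AB) + S(BC) − S(B) − S(ABC) = 0, S(CA) + S(AB) − S(A) − S(CAB) = 0, and S(AD) + S(DB) − S(D) − S(ADB) = 0. Then S(ABC) + S(D) ≥ S(AB) + S(CD), equivalently I(ABC;D) ≥ I(AB;CD). -/

import Mathlib

/-!
Write `ρ_X` for the marginal on `X`. The proof turns the three entropic equalities into structural
information on the state.

*Equality in strong subadditivity.* If `S(XY) + S(YZ) = S(Y) + S(XYZ)` then
`ρ_YZ^{1/2} ρ_Y^{-1/2} ρ_XY^{1/2} = ρ_XYZ^{1/2}` (`petz_rigidity`, `petz_entropy`). The relative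
entropy of `ρ` and `σ` is the increment over `[0, 1]` of `∑ aᵢ log ((1 - u) sᵢ + u rᵢ)`, whose
derivative is governed by the trace of `Z ρ`, where `Z` solves the Sylvester equation
`(1 - u) σ Z + u Z ρ = ρ`. This trace can only decrease under restriction to a subsystem (`defect`),
so equality of the relative entropies forces equality for every `u` in `(0, 1)`, and hence the
solutions `Z` of the two Sylvester equations agree on `ρ`. Linear independence of the Cauchy
kernels (`cauchy_indep`) transfers this identity to the square root.

*The two Markov conditions `A – B – C` and `B – A – C`.* The blocks of the square root of `ρ_ABC`
over `C` are obtained from that of `ρ_AB` by acting on `B` alone, and also by acting on `A` alone.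
Hence the operators acting on `B` commute on the support of `ρ_B`. Their symmetric compressions
`ρ_B^{-1/4} S ρ_B^{-1/4}` can be diagonalized simultaneously, and a fixed point argument shows that
they also commute with `ρ_B` (`double_markov`). So there is an orthonormal basis of `B` in which
`ρ_BC` is block diagonal with blocks `λ_b (m_b)²`, and the label `m_b` can be read off from `A` as
well as from `B` (`markov_structure`).

*The Markov condition `A – D – B`.* A label that `A` and `B` both know is also known to `D`: the
`D`-marginals of the parts of the state with different labels are orthogonal
(`orthogonal_marginals`).

*Conclusion.* As `D` determines the label, Klein's inequality bounds `S(CD) - S(D)` by the average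
`∑ λ_b S((m_b)²)` (`entropy_bound`, `cond_entropy_le`). By `vNEntropy_blocks` this average equals
`S(BC) - S(B)`, which is `S(ABC) - S(AB)` by the first hypothesis.
-/

open scoped BigOperators ComplexOrder

/-- Von Neumann entropy (base 2) of a matrix: for a Hermitian matrix, the Shannon
entropy of its eigenvalues; junk value `0` for non-Hermitian matrices. -/
noncomputable def vNEntropy {n : Type*} [Fintype n] [DecidableEq n] (M : Matrix n n ℂ) : ℝ :=
  if h : M.IsHermitian then -∑ i, (h.eigenvalues i) * Real.logb 2 (h.eigenvalues i) else 0

/-- A density matrix: positive semidefinite with trace one. -/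
def IsState {n : Type*} [Fintype n] [DecidableEq n] (M : Matrix n n ℂ) : Prop :=
  M.PosSemidef ∧ M.trace = 1

section Quad

variable {A B C D : Type*} [Fintype A] [DecidableEq A] [Fintype B] [DecidableEq B]
  [Fintype C] [DecidableEq C] [Fintype D] [DecidableEq D]
  (ρ : Matrix (A × B × C × D) (A × B × C × D) ℂ)

/-- Entropies of the 15 marginals of a quadripartite state. -/
noncomputable def SA : ℝ :=
  vNEntropy (Matrix.of fun a a' : A => ∑ b, ∑ c, ∑ d, ρ (a, b, c, d) (a', b, c, d))
noncomputable def SB : ℝ :=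
  vNEntropy (Matrix.of fun b b' : B => ∑ a, ∑ c, ∑ d, ρ (a, b, c, d) (a, b', c, d))
noncomputable def SC : ℝ :=
  vNEntropy (Matrix.of fun c c' : C => ∑ a, ∑ b, ∑ d, ρ (a, b, c, d) (a, b, c', d))
noncomputable def SD : ℝ :=
  vNEntropy (Matrix.of fun d d' : D => ∑ a, ∑ b, ∑ c, ρ (a, b, c, d) (a, b, c, d'))
noncomputable def SAB : ℝ :=
  vNEntropy (Matrix.of fun p q : A × B => ∑ c, ∑ d, ρ (p.1, p.2, c, d) (q.1, q.2, c, d))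
noncomputable def SAC : ℝ :=
  vNEntropy (Matrix.of fun p q : A × C => ∑ b, ∑ d, ρ (p.1, b, p.2, d) (q.1, b, q.2, d))
noncomputable def SAD : ℝ :=
  vNEntropy (Matrix.of fun p q : A × D => ∑ b, ∑ c, ρ (p.1, b, c, p.2) (q.1, b, c, q.2))
noncomputable def SBC : ℝ :=
  vNEntropy (Matrix.of fun p q : B × C => ∑ a, ∑ d, ρ (a, p.1, p.2, d) (a, q.1, q.2, d))
noncomputable def SBD : ℝ :=
  vNEntropy (Matrix.of fun p q : B × D => ∑ a, ∑ c, ρ (a, p.1, c, p.2) (a, q.1, c, q.2))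
noncomputable def SCD : ℝ :=
  vNEntropy (Matrix.of fun p q : C × D => ∑ a, ∑ b, ρ (a, b, p.1, p.2) (a, b, q.1, q.2))
noncomputable def SABC : ℝ :=
  vNEntropy (Matrix.of fun p q : A × B × C =>
    ∑ d, ρ (p.1, p.2.1, p.2.2, d) (q.1, q.2.1, q.2.2, d))
noncomputable def SABD : ℝ :=
  vNEntropy (Matrix.of fun p q : A × B × D =>
    ∑ c, ρ (p.1, p.2.1, c, p.2.2) (q.1, q.2.1, c, q.2.2))
noncomputable def SACD : ℝ :=
  vNEntropy (Matrix.of fun p q : A × C × D =>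
    ∑ b, ρ (p.1, b, p.2.1, p.2.2) (q.1, b, q.2.1, q.2.2))
noncomputable def SBCD : ℝ :=
  vNEntropy (Matrix.of fun p q : B × C × D =>
    ∑ a, ρ (a, p.1, p.2.1, p.2.2) (a, q.1, q.2.1, q.2.2))
noncomputable def SABCD : ℝ := vNEntropy ρ

end Quad

open Matrix

/-! ### Functional calculus of positive semidefinite matrices -/

section FunctionalCalculus

variable {n m : Type*} [Fintype n] [DecidableEq n] [Fintype m] [DecidableEq m]

/-- The spectrum is finite, so the functional calculus applies to every real function. -/
lemma continuousOn_spectrum (f : ℝ → ℝ) (M : Matrix n n ℂ) : ContinuousOn f (spectrum ℝ M) := by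
  have : Finite (spectrum ℝ M) := Matrix.finite_real_spectrum
  exact (Set.toFinite _).continuousOn f

lemma cfc_mul_cfc (f g : ℝ → ℝ) (M : Matrix n n ℂ) :
    cfc f M * cfc g M = cfc (fun x => f x * g x) M :=
  (cfc_mul f g M (continuousOn_spectrum f M) (continuousOn_spectrum g M)).symm

lemma cfc_conjTranspose (f : ℝ → ℝ) (M : Matrix n n ℂ) : (cfc f M)ᴴ = cfc f M :=
  cfc_predicate (p := IsSelfAdjoint) f M

lemma map_cfc_matrix (φ : Matrix m m ℂ →⋆ₐ[ℂ] Matrix n n ℂ) (f : ℝ → ℝ) {M : Matrix m m ℂ}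
    (hM : M.IsHermitian) : φ (cfc f M) = cfc f (φ M) := by
  have hc : Continuous φ := φ.toAlgHom.toLinearMap.continuous_of_finiteDimensional
  have h1 : IsSelfAdjoint (φ M) := by
    have : IsSelfAdjoint M := hM
    exact this.map φ
  exact StarAlgHomClass.map_cfc (R := ℝ) (S := ℂ) φ f M (continuousOn_spectrum f M) hc hM h1

/-- One diagonalization serves for the functional calculus of all real functions. -/
lemma exists_spectral {M : Matrix n n ℂ} (hM : M.PosSemidef) :
    ∃ (U : Matrix n n ℂ) (r : n → ℝ), U * Uᴴ = 1 ∧ Uᴴ * U = 1 ∧ (∀ i, 0 ≤ r i) ∧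
      ∀ f : ℝ → ℝ, cfc f M = U * diagonal (fun i => ((f (r i) : ℝ) : ℂ)) * Uᴴ := by
  refine ⟨hM.1.eigenvectorUnitary, hM.1.eigenvalues, ?_, ?_, hM.eigenvalues_nonneg, fun f => ?_⟩
  · exact Unitary.coe_mul_star_self _
  · exact Unitary.coe_star_mul_self _
  · rw [hM.1.cfc_eq, IsHermitian.cfc, Unitary.conjStarAlgAut_apply]
    rfl

lemma cfc_congr_nonneg {M : Matrix n n ℂ} (hM : M.PosSemidef) {f g : ℝ → ℝ}
    (h : ∀ x, 0 ≤ x → f x = g x) : cfc f M = cfc g M := by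
  obtain ⟨U, r, -, -, hr, hf⟩ := exists_spectral hM
  rw [hf, hf]
  simp only [h _ (hr _)]

lemma cfc_self {M : Matrix n n ℂ} (hM : M.PosSemidef) {f : ℝ → ℝ}
    (h : ∀ x, 0 ≤ x → f x = x) : cfc f M = M := by
  rw [cfc_congr_nonneg hM (g := fun x => x) h]
  exact cfc_id' ℝ M hM.1

/-- The inverse square root. As `isq 0 = 0`, the matrix `cfc isq M` is the pseudo-inverse of the
square root of `M`, vanishing on its kernel. -/
noncomputable def isq (x : ℝ) : ℝ := (√x)⁻¹

/-- Indicator of the nonzero reals; `cfc sp M` is the support projection of `M`. -/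
noncomputable def sp (x : ℝ) : ℝ := if x = 0 then 0 else 1

lemma sqrt_mul_sqrt_cfc {M : Matrix n n ℂ} (hM : M.PosSemidef) :
    cfc Real.sqrt M * cfc Real.sqrt M = M := by
  rw [cfc_mul_cfc, cfc_self hM fun x hx => Real.mul_self_sqrt hx]

lemma sp_mul_self {M : Matrix n n ℂ} (hM : M.PosSemidef) : cfc sp M * M = M := by
  conv_lhs => rw [← cfc_self hM (f := fun x => x) (fun _ _ => rfl)]
  rw [cfc_self hM (fun _ _ => rfl)]
  nth_rewrite 2 [← cfc_self hM (f := fun x => x) (fun _ _ => rfl)]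
  rw [cfc_mul_cfc, cfc_self hM]
  intro x _
  by_cases h : x = 0 <;> simp [sp, h]

lemma sqrt_mul_isq {M : Matrix n n ℂ} (hM : M.PosSemidef) :
    cfc Real.sqrt M * cfc isq M = cfc sp M := by
  rw [cfc_mul_cfc]
  refine cfc_congr_nonneg hM fun x hx => ?_
  by_cases h : x = 0
  · simp [sp, h]
  · have : √x ≠ 0 := (Real.sqrt_pos.2 (lt_of_le_of_ne hx (Ne.symm h))).ne'
    simp [sp, isq, h, this]

lemma isq_mul_isq_mul {M : Matrix n n ℂ} (hM : M.PosSemidef) :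
    cfc isq M * M * cfc isq M = cfc sp M := by
  nth_rewrite 2 [← cfc_self hM (f := fun x => x) (fun _ _ => rfl)]
  rw [cfc_mul_cfc, cfc_mul_cfc]
  refine cfc_congr_nonneg hM fun x hx => ?_
  by_cases h : x = 0
  · simp [sp, h]
  · have : √x ≠ 0 := (Real.sqrt_pos.2 (lt_of_le_of_ne hx (Ne.symm h))).ne'
    simp only [isq, sp, h, if_false]
    have h2 := Real.mul_self_sqrt hx
    field_simp
    nlinarith

/-- The trace is the squared Hilbert–Schmidt norm of `X M^{1/2}`. -/
lemma mul_sqrt_eq_zero {M : Matrix n n ℂ} (hM : M.PosSemidef) {X : Matrix n n ℂ}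
    (h : (Xᴴ * X * M).trace = 0) : X * cfc Real.sqrt M = 0 := by
  rw [← Matrix.trace_conjTranspose_mul_self_eq_zero_iff, conjTranspose_mul, cfc_conjTranspose,
    ← h]
  rw [← sqrt_mul_sqrt_cfc hM, Matrix.mul_assoc, trace_mul_comm, ← sqrt_mul_sqrt_cfc hM]
  simp only [Matrix.mul_assoc, sqrt_mul_sqrt_cfc hM]

lemma mul_eq_zero_of_trace {M : Matrix n n ℂ} (hM : M.PosSemidef) {X : Matrix n n ℂ}
    (h : (Xᴴ * X * M).trace = 0) : X * M = 0 := by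
  rw [← sqrt_mul_sqrt_cfc hM, ← Matrix.mul_assoc, mul_sqrt_eq_zero hM h, Matrix.zero_mul]

lemma mul_sqrt_eq_zero_iff {M : Matrix n n ℂ} (hM : M.PosSemidef) {X : Matrix n n ℂ} :
    X * cfc Real.sqrt M = 0 ↔ X * M = 0 := by
  constructor
  · intro h
    rw [← sqrt_mul_sqrt_cfc hM, ← Matrix.mul_assoc, h, Matrix.zero_mul]
  · intro h
    apply mul_sqrt_eq_zero hM
    rw [Matrix.mul_assoc, h, Matrix.mul_zero, trace_zero]

end FunctionalCalculus

/-! ### Entropy from a diagonalization -/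

section Entropy

variable {n : Type*} [Fintype n] [DecidableEq n]

/-- The entropy, in natural units, can be computed from any unitary diagonalization: the eigenvalues
are determined up to order by the characteristic polynomial. -/
lemma vNEntropy_diag {M U : Matrix n n ℂ} (r : n → ℝ) (hU : Uᴴ * U = 1)
    (h : M = U * diagonal (fun i => (r i : ℂ)) * Uᴴ) :
    vNEntropy M * Real.log 2 = - ∑ i, r i * Real.log (r i) := by
  have hM : M.IsHermitian := by
    rw [h]
    apply Matrix.isHermitian_mul_mul_conjTranspose
    simp [IsHermitian, diagonal_conjTranspose, Pi.star_def]
  have hc : M.charpoly = ∏ i, (Polynomial.X - Polynomial.C (r i : ℂ)) := by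
    rw [h, charpoly_mul_comm, ← Matrix.mul_assoc, hU, Matrix.one_mul, charpoly_diagonal]
  have hr : Finset.univ.val.map (fun i => (r i : ℂ)) =
      Finset.univ.val.map (fun i => (hM.eigenvalues i : ℂ)) := by
    have h1 := hM.roots_charpoly_eq_eigenvalues
    rw [hc, Polynomial.roots_prod _ _
      (by simp [Finset.prod_ne_zero_iff, Polynomial.X_sub_C_ne_zero])] at h1
    simpa [Function.comp_def] using h1
  have key := congrArg (fun s => (s.map (fun z : ℂ => z.re * Real.log z.re)).sum) hr
  simp only [Multiset.map_map, Function.comp_def, Complex.ofReal_re] at key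
  have h2 : Real.log 2 ≠ 0 := (Real.log_pos (by norm_num)).ne'
  unfold vNEntropy
  rw [dif_pos hM, neg_mul, Finset.sum_mul]
  congr 1
  refine Eq.trans ?_ key.symm
  refine Finset.sum_congr rfl fun i _ => ?_
  rw [Real.logb]
  field_simp

end Entropy

/-! ### Cauchy kernels and logarithmic interpolation -/

section Scalar

/-- Linear independence of the Cauchy kernels `s ↦ 1 / (y + s)` for distinct `y ≥ 0`. -/
lemma cauchy_indep (S : Finset ℝ) (c : ℝ → ℂ) (hS : ∀ y ∈ S, 0 ≤ y)
    (h : ∀ s : ℝ, 0 < s → ∑ y ∈ S, c y * (((y + s)⁻¹ : ℝ) : ℂ) = 0) : ∀ y ∈ S, c y = 0 := by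
  classical
  let p : Polynomial ℂ :=
    ∑ y ∈ S, Polynomial.C (c y) * ∏ x ∈ S.erase y, (Polynomial.X + Polynomial.C (x : ℂ))
  have hp : p = 0 := by
    refine Polynomial.eq_zero_of_infinite_isRoot p ?_
    have hinf : (Set.Ioi (0 : ℝ)).Infinite := Set.Ioi_infinite 0
    refine (hinf.image (f := fun x : ℝ => (x : ℂ))
      (fun a _ b _ hab => Complex.ofReal_injective hab)).mono ?_
    rintro _ ⟨s, hs, rfl⟩
    have hs : 0 < s := hs
    simp only [Set.mem_ofPred_eq, Polynomial.IsRoot, p]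
    rw [Polynomial.eval_finsetSum]
    have h1 : ∀ y ∈ S, Polynomial.eval (s : ℂ) (Polynomial.C (c y) *
        ∏ x ∈ S.erase y, (Polynomial.X + Polynomial.C (x : ℂ))) =
        (∏ x ∈ S, ((s : ℂ) + x)) * (c y * (((y + s)⁻¹ : ℝ) : ℂ)) := by
      intro y hy
      have hne : (s : ℂ) + y ≠ 0 := by
        have := hS y hy
        have h2 : s + y ≠ 0 := by positivity
        exact_mod_cast h2
      rw [← Finset.mul_prod_erase S _ hy]
      simp only [Polynomial.eval_mul, Polynomial.eval_C, Polynomial.eval_prod,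
        Polynomial.eval_add, Polynomial.eval_X]
      push_cast
      rw [add_comm (y : ℂ) s]
      field_simp
    rw [Finset.sum_congr rfl h1, ← Finset.mul_sum, h s hs, mul_zero]
  intro y hy
  have h2 : Polynomial.eval (-(y : ℂ)) p = 0 := by rw [hp]; simp
  simp only [p] at h2
  rw [Polynomial.eval_finsetSum, Finset.sum_eq_single_of_mem y hy] at h2
  · simp only [Polynomial.eval_mul, Polynomial.eval_C, Polynomial.eval_prod,
        Polynomial.eval_add, Polynomial.eval_X] at h2
    rcases mul_eq_zero.1 h2 with h3 | h3
    · exact h3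
    · exfalso
      obtain ⟨x, hx, hx2⟩ := Finset.prod_eq_zero_iff.1 h3
      have : (x : ℂ) = y := by linear_combination hx2
      exact (Finset.ne_of_mem_erase hx) (by exact_mod_cast this)
  · intro z hz hzy
    simp only [Polynomial.eval_mul, Polynomial.eval_C, Polynomial.eval_prod,
        Polynomial.eval_add, Polynomial.eval_X]
    rw [Finset.prod_eq_zero (Finset.mem_erase.2 ⟨hzy.symm, hy⟩) (by ring), mul_zero]

/-- A linear relation valid for all the kernels `t / ((1 - u) w + u t)`, `0 < u < 1`, is also valid
for `w^{-1/2} t^{1/2}`: where `t ≠ 0`, both depend on `w / t` only, and the kernels separate the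
values of `w / t`. -/
lemma sum_sqrt_eq_zero {α : Type*} [Fintype α] (a : α → ℂ) (t w : α → ℝ)
    (ht : ∀ i, 0 ≤ t i) (hw : ∀ i, 0 ≤ w i)
    (h : ∀ u : ℝ, 0 < u → u < 1 →
      ∑ i, a i * ((t i / ((1 - u) * w i + u * t i) : ℝ) : ℂ) = 0) :
    ∑ i, a i * ((isq (w i) * √(t i) : ℝ) : ℂ) = 0 := by
  classical
  let I : Finset α := Finset.univ.filter fun i => t i ≠ 0
  let x : α → ℝ := fun i => w i / t i
  let c : ℝ → ℂ := fun y => ∑ i ∈ I with x i = y, a i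
  have hpos : ∀ i ∈ I, 0 < t i := fun i hi =>
    lt_of_le_of_ne (ht i) (Ne.symm (Finset.mem_filter.1 hi).2)
  have hgroup : ∀ f : ℝ → ℂ, ∑ y ∈ I.image x, c y * f y = ∑ i ∈ I, a i * f (x i) := by
    intro f
    rw [← Finset.sum_fiberwise_of_maps_to (s := I) (t := I.image x) (g := x)
      (fun i hi => Finset.mem_image_of_mem _ hi)]
    refine Finset.sum_congr rfl fun y _ => ?_
    rw [Finset.sum_mul]
    refine Finset.sum_congr rfl fun i hi => ?_
    rw [(Finset.mem_filter.1 hi).2]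
  have hrestr : ∀ f : α → ℂ, (∀ i, t i = 0 → f i = 0) → ∑ i, a i * f i = ∑ i ∈ I, a i * f i := by
    intro f hf
    symm
    refine Finset.sum_subset (Finset.subset_univ _) fun i _ hi => ?_
    have : t i = 0 := by simpa [I] using hi
    rw [hf i this, mul_zero]
  have hc : ∀ y ∈ I.image x, c y = 0 := by
    apply cauchy_indep
    · intro y hy
      obtain ⟨i, hi, rfl⟩ := Finset.mem_image.1 hy
      exact div_nonneg (hw i) (ht i)
    · intro s hs
      rw [hgroup fun y => (((y + s)⁻¹ : ℝ) : ℂ)]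
      have h1 := h (s / (1 + s)) (by positivity) (by rw [div_lt_one (by positivity)]; linarith)
      rw [hrestr _ (fun i hi => by simp [hi])] at h1
      have h2 : ∀ i ∈ I, a i * ((t i / ((1 - s / (1 + s)) * w i + s / (1 + s) * t i) : ℝ) : ℂ) =
          ((1 + s : ℝ) : ℂ) * (a i * (((x i + s)⁻¹ : ℝ) : ℂ)) := by
        intro i hi
        have h3 := hpos i hi
        have h4 := hw i
        have : t i / ((1 - s / (1 + s)) * w i + s / (1 + s) * t i) = (1 + s) * (x i + s)⁻¹ := by
          have h5 : w i + s * t i ≠ 0 := by positivity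
          have h6 : (1 - s / (1 + s)) * w i + s / (1 + s) * t i = (w i + s * t i) / (1 + s) := by
            field_simp
            ring
          have h7 : x i + s = (w i + s * t i) / t i := by
            simp only [x]
            field_simp
          rw [h6, h7]
          field_simp
        rw [this]
        push_cast
        ring
      rw [Finset.sum_congr rfl h2, ← Finset.mul_sum] at h1
      have h8 : ((1 + s : ℝ) : ℂ) ≠ 0 := by
        have : (1 + s : ℝ) ≠ 0 := by positivity
        exact_mod_cast this
      exact (mul_eq_zero.1 h1).resolve_left h8
  rw [hrestr _ (fun i hi => by simp [hi])]
  have h1 : ∀ i ∈ I, a i * ((isq (w i) * √(t i) : ℝ) : ℂ) = a i * ((isq (x i) : ℝ) : ℂ) := by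
    intro i hi
    congr 2
    simp only [isq, x]
    rw [Real.sqrt_div' _ (ht i), inv_div, div_eq_mul_inv, mul_comm]
  rw [Finset.sum_congr rfl h1, ← hgroup fun y => ((isq y : ℝ) : ℂ)]
  exact Finset.sum_eq_zero fun y hy => by rw [hc y hy, zero_mul]

/-- The interpolation `u ↦ ∑ aᵢ log ((1 - u) sᵢ + u rᵢ)`. -/
noncomputable def interp {α : Type*} [Fintype α] (a s r : α → ℝ) (u : ℝ) : ℝ :=
  ∑ i, a i * Real.log ((1 - u) * s i + u * r i)

lemma interp_continuousOn {α : Type*} [Fintype α] (a s r : α → ℝ)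
    (h : ∀ i, a i ≠ 0 → 0 < s i ∧ 0 < r i) :
    ContinuousOn (interp a s r) (Set.Icc 0 1) := by
  unfold interp
  refine continuousOn_finsetSum _ fun i _ => ?_
  by_cases hi : a i = 0
  · simp only [hi, zero_mul]
    exact continuousOn_const
  · obtain ⟨h1, h2⟩ := h i hi
    refine ContinuousOn.mul continuousOn_const (ContinuousOn.log (by fun_prop) ?_)
    rintro u ⟨hu0, hu1⟩
    have : 0 < (1 - u) * s i + u * r i := by
      rcases eq_or_lt_of_le hu0 with h3 | h3
      · rw [← h3]; simpa using h1
      · have := mul_pos h3 h2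
        have := mul_nonneg (sub_nonneg.2 hu1) h1.le
        linarith
    exact this.ne'

lemma interp_hasDerivAt {α : Type*} [Fintype α] (a s r : α → ℝ)
    (h : ∀ i, a i ≠ 0 → 0 < s i ∧ 0 < r i) {u : ℝ} (hu0 : 0 < u) (hu1 : u < 1) :
    HasDerivAt (interp a s r)
      ((1 - u)⁻¹ * ((∑ i, a i * (r i / ((1 - u) * s i + u * r i))) - ∑ i, a i)) u := by
  unfold interp
  rw [← Finset.sum_sub_distrib, Finset.mul_sum]
  refine HasDerivAt.fun_sum fun i _ => ?_
  by_cases hi : a i = 0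
  · simp only [hi, zero_mul, sub_zero, mul_zero]
    exact hasDerivAt_const _ _
  · obtain ⟨h1, h2⟩ := h i hi
    have hu2 : 0 < 1 - u := by linarith
    have h3 : 0 < (1 - u) * s i + u * r i := by positivity
    have h4 : HasDerivAt (fun u : ℝ => (1 - u) * s i + u * r i) ((-1) * s i + 1 * r i) u :=
      (((hasDerivAt_id u).const_sub 1).mul_const _).add ((hasDerivAt_id u).mul_const _)
    refine ((h4.log h3.ne').const_mul (a i)).congr_deriv ?_
    field_simp
    ring

/-- If the interpolation of one family grows at least as fast as that of another, but they have
equal total increments over `[0, 1]`, the growth rates agree everywhere on `(0, 1)`. -/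
lemma interp_rigid {α β : Type*} [Fintype α] [Fintype β] (a s r : α → ℝ) (b s' r' : β → ℝ)
    (h : ∀ i, a i ≠ 0 → 0 < s i ∧ 0 < r i) (h' : ∀ i, b i ≠ 0 → 0 < s' i ∧ 0 < r' i)
    (hab : ∑ i, a i = ∑ i, b i)
    (hle : ∀ u, 0 < u → u < 1 → ∑ i, b i * (r' i / ((1 - u) * s' i + u * r' i)) ≤
      ∑ i, a i * (r i / ((1 - u) * s i + u * r i)))
    (heq : interp a s r 1 - interp a s r 0 = interp b s' r' 1 - interp b s' r' 0)
    {u : ℝ} (hu0 : 0 < u) (hu1 : u < 1) :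
    ∑ i, b i * (r' i / ((1 - u) * s' i + u * r' i)) =
      ∑ i, a i * (r i / ((1 - u) * s i + u * r i)) := by
  let G : ℝ → ℝ := fun u => interp a s r u - interp b s' r' u
  have hd : ∀ u, 0 < u → u < 1 → HasDerivAt G ((1 - u)⁻¹ *
      ((∑ i, a i * (r i / ((1 - u) * s i + u * r i))) -
        ∑ i, b i * (r' i / ((1 - u) * s' i + u * r' i)))) u := by
    intro u hu0 hu1
    refine ((interp_hasDerivAt a s r h hu0 hu1).sub
      (interp_hasDerivAt b s' r' h' hu0 hu1)).congr_deriv ?_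
    rw [hab]
    ring
  have hmono : MonotoneOn G (Set.Icc 0 1) := by
    refine monotoneOn_of_deriv_nonneg (convex_Icc 0 1)
      ((interp_continuousOn a s r h).sub (interp_continuousOn b s' r' h')) ?_ ?_
    · intro x hx
      rw [interior_Icc] at hx
      exact (hd x hx.1 hx.2).differentiableAt.differentiableWithinAt
    · intro x hx
      rw [interior_Icc] at hx
      rw [(hd x hx.1 hx.2).deriv]
      have := hle x hx.1 hx.2
      exact mul_nonneg (inv_nonneg.2 (by linarith [hx.2])) (by linarith)
  have hconst : ∀ x ∈ Set.Icc (0 : ℝ) 1, G x = G 0 := by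
    intro x hx
    refine le_antisymm ?_ (hmono ⟨le_rfl, zero_le_one⟩ hx hx.1)
    calc G x ≤ G 1 := hmono hx ⟨zero_le_one, le_rfl⟩ hx.2
      _ = G 0 := by simp only [G]; linarith
  have h0 : HasDerivAt G 0 u := by
    refine (hasDerivAt_const u (G 0)).congr_of_eventuallyEq ?_
    filter_upwards [Ioo_mem_nhds hu0 hu1] with x hx
    exact hconst x ⟨hx.1.le, hx.2.le⟩
  have h1 := (hd u hu0 hu1).unique h0
  have h2 : (1 - u)⁻¹ ≠ 0 := inv_ne_zero (by linarith)
  linarith [(mul_eq_zero.1 h1).resolve_left h2]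

end Scalar

/-! ### Equality in the monotonicity of relative entropy -/

section Petz

set_option linter.unusedSectionVars false

variable {n m : Type*} [Fintype n] [DecidableEq n] [Fintype m] [DecidableEq m]

/-- The double operator function: if `σ = V diag(s) Vᴴ` and `ρ = U diag(r) Uᴴ`, this is the
image of `1` under `F(L_σ, R_ρ)` (left multiplication by `σ`, right multiplication by `ρ`). -/
noncomputable def dop (V : Matrix n n ℂ) (s : n → ℝ) (U : Matrix n n ℂ) (r : n → ℝ)
    (F : ℝ → ℝ → ℝ) : Matrix n n ℂ :=
  V * Matrix.of (fun k i => ((F (s k) (r i) : ℝ) : ℂ) * (Vᴴ * U) k i) * Uᴴ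

lemma dop_congr {V : Matrix n n ℂ} {s : n → ℝ} {U : Matrix n n ℂ} {r : n → ℝ}
    {F F' : ℝ → ℝ → ℝ} (h : ∀ k i, F (s k) (r i) = F' (s k) (r i)) :
    dop V s U r F = dop V s U r F' := by
  unfold dop
  simp only [h]

lemma dop_add (V : Matrix n n ℂ) (s : n → ℝ) (U : Matrix n n ℂ) (r : n → ℝ)
    (F F' : ℝ → ℝ → ℝ) :
    dop V s U r F + dop V s U r F' = dop V s U r (fun x y => F x y + F' x y) := by
  unfold dop
  rw [← Matrix.add_mul, ← Matrix.mul_add]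
  congr 2
  ext k i
  simp [add_mul]

lemma dop_smul (V : Matrix n n ℂ) (s : n → ℝ) (U : Matrix n n ℂ) (r : n → ℝ) (c : ℝ)
    (F : ℝ → ℝ → ℝ) :
    (c : ℂ) • dop V s U r F = dop V s U r (fun x y => c * F x y) := by
  unfold dop
  rw [← Matrix.smul_mul, ← Matrix.mul_smul]
  congr 2
  ext k i
  simp [mul_assoc]

lemma mul_dop {V : Matrix n n ℂ} {s : n → ℝ} {U : Matrix n n ℂ} {r : n → ℝ}
    {F : ℝ → ℝ → ℝ} (hV : Vᴴ * V = 1) {X : Matrix n n ℂ} {f : ℝ → ℝ}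
    (hX : X = V * diagonal (fun i => ((f (s i) : ℝ) : ℂ)) * Vᴴ) :
    X * dop V s U r F = dop V s U r (fun x y => f x * F x y) := by
  unfold dop
  have h : ∀ Y : Matrix n n ℂ, V * diagonal (fun i => ((f (s i) : ℝ) : ℂ)) * Vᴴ * (V * Y * Uᴴ) =
      V * (diagonal (fun i => ((f (s i) : ℝ) : ℂ)) * Y) * Uᴴ := by
    intro Y
    calc _ = V * diagonal (fun i => ((f (s i) : ℝ) : ℂ)) * (Vᴴ * V) * Y * Uᴴ := by
          simp only [Matrix.mul_assoc]
      _ = _ := by rw [hV, Matrix.mul_one, Matrix.mul_assoc V]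
  rw [hX, h]
  congr 2
  ext k i
  simp [diagonal_mul, mul_assoc]

lemma dop_mul {V : Matrix n n ℂ} {s : n → ℝ} {U : Matrix n n ℂ} {r : n → ℝ}
    {F : ℝ → ℝ → ℝ} (hU : Uᴴ * U = 1) {X : Matrix n n ℂ} {f : ℝ → ℝ}
    (hX : X = U * diagonal (fun i => ((f (r i) : ℝ) : ℂ)) * Uᴴ) :
    dop V s U r F * X = dop V s U r (fun x y => F x y * f y) := by
  unfold dop
  rw [hX, Matrix.mul_assoc _ Uᴴ, ← Matrix.mul_assoc Uᴴ, ← Matrix.mul_assoc Uᴴ, hU, Matrix.one_mul,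
    ← Matrix.mul_assoc, Matrix.mul_assoc V]
  congr 2
  ext k i
  simp only [mul_diagonal, of_apply]
  push_cast
  ring

lemma dop_one {V : Matrix n n ℂ} {s : n → ℝ} {U : Matrix n n ℂ} {r : n → ℝ}
    (hV : V * Vᴴ = 1) (hU : U * Uᴴ = 1) : dop V s U r (fun _ _ => 1) = 1 := by
  unfold dop
  have : (Matrix.of fun k i => (((1 : ℝ) : ℝ) : ℂ) * (Vᴴ * U) k i) = Vᴴ * U := by
    ext k i; simp
  rw [this, ← Matrix.mul_assoc, hV, Matrix.one_mul, hU]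

lemma trace_dop {V : Matrix n n ℂ} {s : n → ℝ} {U : Matrix n n ℂ} {r : n → ℝ}
    (F : ℝ → ℝ → ℝ) :
    (dop V s U r F).trace =
      ((∑ p : n × n, Complex.normSq ((Vᴴ * U) p.1 p.2) * F (s p.1) (r p.2) : ℝ) : ℂ) := by
  unfold dop
  rw [Matrix.mul_assoc, trace_mul_comm, Matrix.mul_assoc]
  have h : Uᴴ * V = (Vᴴ * U)ᴴ := by rw [conjTranspose_mul, conjTranspose_conjTranspose]
  rw [h, trace, Fintype.sum_prod_type]
  push_cast
  refine Finset.sum_congr rfl fun k _ => ?_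
  rw [diag_apply, Matrix.mul_apply]
  refine Finset.sum_congr rfl fun i _ => ?_
  rw [of_apply, conjTranspose_apply, Complex.normSq_eq_conj_mul_self]
  simp only [RCLike.star_def]
  ring

lemma dop_apply (V : Matrix n n ℂ) (s : n → ℝ) (U : Matrix n n ℂ) (r : n → ℝ)
    (F : ℝ → ℝ → ℝ) :
    dop V s U r F = ∑ p : n × n, ((F (s p.1) (r p.2) : ℝ) : ℂ) •
      Matrix.of (fun x y => V x p.1 * (Vᴴ * U) p.1 p.2 * Uᴴ p.2 y) := by
  ext x y
  unfold dop
  rw [Matrix.sum_apply, Fintype.sum_prod_type, Finset.sum_comm, Matrix.mul_apply]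
  refine Finset.sum_congr rfl fun i _ => ?_
  rw [Matrix.mul_apply, Finset.sum_mul]
  refine Finset.sum_congr rfl fun k _ => ?_
  simp only [of_apply, Matrix.smul_apply, smul_eq_mul]
  ring

/-- The resolvent-type kernel `y / ((1 - u) x + u y)`. -/
noncomputable def kern (u x y : ℝ) : ℝ := y / ((1 - u) * x + u * y)

lemma kern_eq {u x y : ℝ} (hu0 : 0 < u) (hu1 : u < 1) (hx : 0 ≤ x) (hy : 0 ≤ y) :
    (1 - u) * (x * kern u x y) + u * (kern u x y * y) = y := by
  unfold kern
  by_cases h : (1 - u) * x + u * y = 0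
  · have h1 : 0 ≤ (1 - u) * x := mul_nonneg (by linarith) hx
    have h2 : 0 ≤ u * y := mul_nonneg hu0.le hy
    have h3 : u * y = 0 := by linarith
    have h4 : y = 0 := (mul_eq_zero.1 h3).resolve_left hu0.ne'
    simp [h4]
  · field_simp

lemma dop_snd {V : Matrix n n ℂ} {s : n → ℝ} {U : Matrix n n ℂ} {r : n → ℝ} {ρ : Matrix n n ℂ}
    (hV : V * Vᴴ = 1) (hU : U * Uᴴ = 1) (hU' : Uᴴ * U = 1)
    (hρ : ρ = U * diagonal (fun i => ((r i : ℝ) : ℂ)) * Uᴴ) :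
    dop V s U r (fun _ y => y) = ρ := by
  have h := dop_mul (V := V) (s := s) (F := fun _ _ => 1) hU' (f := fun x => x) hρ
  rw [dop_one hV hU, Matrix.one_mul] at h
  rw [h]
  exact dop_congr fun _ _ => (one_mul _).symm

/-- The Sylvester equation solved by `dop` of `kern`. -/
lemma sylvester {V : Matrix n n ℂ} {s : n → ℝ} {U : Matrix n n ℂ} {r : n → ℝ}
    {ρ σ : Matrix n n ℂ} (hV : V * Vᴴ = 1) (hV' : Vᴴ * V = 1) (hU : U * Uᴴ = 1)
    (hU' : Uᴴ * U = 1) (hρ : ρ = U * diagonal (fun i => ((r i : ℝ) : ℂ)) * Uᴴ)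
    (hσ : σ = V * diagonal (fun i => ((s i : ℝ) : ℂ)) * Vᴴ) (hr : ∀ i, 0 ≤ r i)
    (hs : ∀ i, 0 ≤ s i) {u : ℝ} (hu0 : 0 < u) (hu1 : u < 1) :
    ((1 - u : ℝ) : ℂ) • (σ * dop V s U r (kern u)) + (u : ℂ) • (dop V s U r (kern u) * ρ) = ρ := by
  rw [mul_dop hV' (f := fun x => x) hσ, dop_mul hU' (f := fun x => x) hρ, dop_smul, dop_smul,
    dop_add]
  conv_rhs => rw [← dop_snd (s := s) hV hU hU' hρ]
  exact dop_congr fun k i => kern_eq hu0 hu1 (hs k) (hr i)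

lemma real_trace {X Y : Matrix n n ℂ} (hY : Y.IsHermitian) {a : ℝ}
    (h : (X * Y).trace = (a : ℂ)) : (Xᴴ * Y).trace = (a : ℂ) := by
  have : Xᴴ * Y = (Y * X)ᴴ := by rw [conjTranspose_mul, hY]
  rw [this, trace_conjTranspose, trace_mul_comm, h]
  exact Complex.conj_ofReal a

/-- Let `τ, ω` be the restrictions of `ρ, σ` along `φ`, and let `Z`, `z` solve the respective
Sylvester equations. Then the trace of `z τ` is at most that of `Z ρ`, as the difference is a
positive combination of squared Hilbert–Schmidt norms; if it vanishes, `φ z` and `Z` agree on `ρ`. -/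
lemma defect (φ : Matrix m m ℂ →⋆ₐ[ℂ] Matrix n n ℂ) {ρ σ Z : Matrix n n ℂ}
    {τ ω z : Matrix m m ℂ} (hρ : ρ.PosSemidef) (hσ : σ.PosSemidef) (hτ : τ.PosSemidef)
    (h1 : ∀ z, (φ z * ρ).trace = (z * τ).trace)
    (h2 : ∀ z, (φ z * σ).trace = (z * ω).trace) {u : ℝ} (hu0 : 0 < u) (hu1 : u < 1)
    (hZ : ((1 - u : ℝ) : ℂ) • (σ * Z) + (u : ℂ) • (Z * ρ) = ρ)
    (hz : ((1 - u : ℝ) : ℂ) • (ω * z) + (u : ℂ) • (z * τ) = τ) {a b : ℝ}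
    (ha : (Z * ρ).trace = (a : ℂ)) (hb : (z * τ).trace = (b : ℂ)) :
    b ≤ a ∧ (b = a → φ z * ρ = Z * ρ) := by
  have T1 : ((φ z)ᴴ * (σ * φ z)).trace = (zᴴ * (ω * z)).trace := by
    have e : (φ z)ᴴ = φ zᴴ := (map_star φ z).symm
    rw [e, ← Matrix.mul_assoc, trace_mul_comm, ← Matrix.mul_assoc, ← map_mul, h2,
      ← Matrix.mul_assoc zᴴ, trace_mul_comm (zᴴ * ω), Matrix.mul_assoc]
  have T2 : ((φ z)ᴴ * (φ z * ρ)).trace = (zᴴ * (z * τ)).trace := by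
    have e : (φ z)ᴴ = φ zᴴ := (map_star φ z).symm
    rw [e, ← Matrix.mul_assoc, ← map_mul, h1, Matrix.mul_assoc]
  have T3 : ((1 - u : ℝ) : ℂ) * (zᴴ * (ω * z)).trace + (u : ℂ) * (zᴴ * (z * τ)).trace = b := by
    rw [← real_trace hτ.1 hb]
    conv_rhs => rw [← hz]
    simp [Matrix.mul_add, trace_add, trace_smul]
  have T4 : ((φ z)ᴴ * ρ).trace = b := by
    have e : (φ z)ᴴ = φ zᴴ := (map_star φ z).symm
    rw [e, h1, real_trace hτ.1 hb]
  have T5 : ((1 - u : ℝ) : ℂ) * ((φ z)ᴴ * (σ * Z)).trace +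
      (u : ℂ) * ((φ z)ᴴ * (Z * ρ)).trace = b := by
    rw [← T4]
    conv_rhs => rw [← hZ]
    simp [Matrix.mul_add, trace_add, trace_smul]
  have T6 : ((1 - u : ℝ) : ℂ) * (Zᴴ * (σ * φ z)).trace +
      (u : ℂ) * (Zᴴ * (φ z * ρ)).trace = b := by
    have e1 : (Zᴴ * (σ * φ z)).trace = star ((φ z)ᴴ * (σ * Z)).trace := by
      rw [← trace_conjTranspose, conjTranspose_mul, conjTranspose_mul, conjTranspose_conjTranspose,
        hσ.1, Matrix.mul_assoc]
    have e2 : (Zᴴ * (φ z * ρ)).trace = star ((φ z)ᴴ * (Z * ρ)).trace := by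
      rw [← trace_conjTranspose, conjTranspose_mul, conjTranspose_mul, conjTranspose_conjTranspose,
        hρ.1, Matrix.mul_assoc ρ, trace_mul_comm ρ, Matrix.mul_assoc]
    have := congrArg star T5
    simp only [star_add, star_mul', RCLike.star_def, Complex.conj_ofReal] at this
    rw [e1, e2]
    exact this
  have T7 : ((1 - u : ℝ) : ℂ) * (Zᴴ * (σ * Z)).trace + (u : ℂ) * (Zᴴ * (Z * ρ)).trace = a := by
    rw [← real_trace hρ.1 ha]
    conv_rhs => rw [← hZ]
    simp [Matrix.mul_add, trace_add, trace_smul]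
  let W := φ z - Z
  have key : ((1 - u : ℝ) : ℂ) * (Wᴴ * σ * W).trace + (u : ℂ) * (W * ρ * Wᴴ).trace
      = ((a - b : ℝ) : ℂ) := by
    have e1 : (Wᴴ * σ * W).trace = ((φ z)ᴴ * (σ * φ z)).trace - ((φ z)ᴴ * (σ * Z)).trace
        - (Zᴴ * (σ * φ z)).trace + (Zᴴ * (σ * Z)).trace := by
      simp only [W, conjTranspose_sub, Matrix.sub_mul, Matrix.mul_sub, trace_sub, Matrix.mul_assoc]
      ring
    have e2 : (W * ρ * Wᴴ).trace = ((φ z)ᴴ * (φ z * ρ)).trace - ((φ z)ᴴ * (Z * ρ)).trace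
        - (Zᴴ * (φ z * ρ)).trace + (Zᴴ * (Z * ρ)).trace := by
      rw [trace_mul_comm]
      simp only [W, conjTranspose_sub, Matrix.sub_mul, Matrix.mul_sub, trace_sub]
      ring
    rw [e1, e2, T1, T2]
    push_cast at T3 T5 T6 T7 ⊢
    linear_combination T3 - T5 - T6 + T7
  have p1 : 0 ≤ (Wᴴ * σ * W).trace := (hσ.conjTranspose_mul_mul_same W).trace_nonneg
  have p2 : 0 ≤ (W * ρ * Wᴴ).trace := (hρ.mul_mul_conjTranspose_same W).trace_nonneg
  have c1 : (0 : ℂ) ≤ ((1 - u : ℝ) : ℂ) := by exact_mod_cast (sub_nonneg.2 hu1.le)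
  have c2 : (0 : ℂ) < (u : ℂ) := by exact_mod_cast hu0
  refine ⟨?_, ?_⟩
  · have h3 : (0 : ℂ) ≤ ((a - b : ℝ) : ℂ) := by
      rw [← key]
      exact add_nonneg (mul_nonneg c1 p1) (mul_nonneg c2.le p2)
    have h4 : 0 ≤ a - b := by exact_mod_cast h3
    linarith
  · intro hab
    rw [hab, sub_self, Complex.ofReal_zero] at key
    have h5 := ((add_eq_zero_iff_of_nonneg (mul_nonneg c1 p1) (mul_nonneg c2.le p2)).1 key).2
    have h6 := (mul_eq_zero.1 h5).resolve_left c2.ne'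
    have h7 : W * ρ = 0 := by
      apply mul_eq_zero_of_trace hρ
      rw [Matrix.mul_assoc, trace_mul_comm, h6]
    simpa [W, Matrix.sub_mul, sub_eq_zero] using h7

/-- If the support of `ρ` is contained in that of `σ`, the weights of the interpolation vanish unless
both eigenvalues involved are positive. -/
lemma support_pos {V : Matrix n n ℂ} {s : n → ℝ} {U : Matrix n n ℂ} {r : n → ℝ}
    {ρ σ : Matrix n n ℂ} (hU' : Uᴴ * U = 1) (hV' : Vᴴ * V = 1)
    (hr : ∀ i, 0 ≤ r i) (hs : ∀ i, 0 ≤ s i)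
    (hfσ : ∀ f : ℝ → ℝ, cfc f σ = V * diagonal (fun i => ((f (s i) : ℝ) : ℂ)) * Vᴴ)
    (idρ : ρ = U * diagonal (fun i => ((r i : ℝ) : ℂ)) * Uᴴ)
    (hsρ : cfc sp σ * ρ = ρ) (p : n × n)
    (hp : Complex.normSq ((Vᴴ * U) p.1 p.2) * r p.2 ≠ 0) : 0 < s p.1 ∧ 0 < r p.2 := by
  obtain ⟨h1, h2⟩ := mul_ne_zero_iff.1 hp
  refine ⟨lt_of_le_of_ne (hs _) fun h0 => ?_, lt_of_le_of_ne (hr _) h2.symm⟩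
  have e : diagonal (fun i => ((sp (s i) : ℝ) : ℂ)) * (Vᴴ * U) *
      diagonal (fun i => ((r i : ℝ) : ℂ)) = (Vᴴ * U) * diagonal (fun i => ((r i : ℝ) : ℂ)) := by
    have h3 := congrArg (fun X => Vᴴ * X * U) hsρ
    simp only [hfσ sp] at h3
    rw [idρ] at h3
    calc _ = (Vᴴ * V) * diagonal (fun i => ((sp (s i) : ℝ) : ℂ)) * Vᴴ *
          (U * diagonal (fun i => ((r i : ℝ) : ℂ))) * (Uᴴ * U) := by
            rw [hV', hU', Matrix.one_mul, Matrix.mul_one]; simp only [Matrix.mul_assoc]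
      _ = _ := by simpa only [Matrix.mul_assoc] using h3
      _ = _ := by simp only [Matrix.mul_assoc, hU', Matrix.mul_one]
  have e' := congrFun (congrFun e p.1) p.2
  rw [mul_diagonal, mul_diagonal, diagonal_mul, ← h0] at e'
  simp only [sp, if_true, Complex.ofReal_zero, zero_mul] at e'
  rcases mul_eq_zero.1 e'.symm with h4 | h4
  · exact h1 (by rw [h4, map_zero])
  · exact h2 (by exact_mod_cast h4)

/-- The increment of the interpolation over `[0, 1]` is the relative entropy of `ρ` and `σ`. -/
lemma interp_ends {V : Matrix n n ℂ} {s : n → ℝ} {U : Matrix n n ℂ} {r : n → ℝ}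
    {ρ σ : Matrix n n ℂ} (hU : U * Uᴴ = 1) (hU' : Uᴴ * U = 1) (hV : V * Vᴴ = 1)
    (hV' : Vᴴ * V = 1)
    (hfσ : ∀ f : ℝ → ℝ, cfc f σ = V * diagonal (fun i => ((f (s i) : ℝ) : ℂ)) * Vᴴ)
    (hfρ : ∀ f : ℝ → ℝ, cfc f ρ = U * diagonal (fun i => ((f (r i) : ℝ) : ℂ)) * Uᴴ)
    (idρ : ρ = U * diagonal (fun i => ((r i : ℝ) : ℂ)) * Uᴴ) :
    (cfc (fun x => x * Real.log x) ρ).trace = ((interp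
      (fun p : n × n => Complex.normSq ((Vᴴ * U) p.1 p.2) * r p.2) (fun p => s p.1)
      (fun p => r p.2) 1 : ℝ) : ℂ) ∧
    (cfc Real.log σ * ρ).trace = ((interp
      (fun p : n × n => Complex.normSq ((Vᴴ * U) p.1 p.2) * r p.2) (fun p => s p.1)
      (fun p => r p.2) 0 : ℝ) : ℂ) := by
  constructor
  · have h := dop_mul (V := V) (s := s) (F := fun _ _ => 1) hU' (f := fun x => x * Real.log x)
      (hfρ fun x => x * Real.log x)
    rw [dop_one hV hU, Matrix.one_mul] at h
    rw [h, trace_dop]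
    simp only [interp]
    congr 1
    refine Finset.sum_congr rfl fun p _ => ?_
    simp only [sub_self, zero_mul, zero_add, one_mul]
    ring
  · have h := mul_dop (U := U) (r := r) (F := fun _ _ => 1) hV' (f := Real.log) (hfσ Real.log)
    rw [dop_one hV hU, Matrix.mul_one] at h
    rw [h, dop_mul hU' (f := fun x => x) idρ, trace_dop]
    simp only [interp]
    congr 1
    refine Finset.sum_congr rfl fun p _ => ?_
    simp only [sub_zero, zero_mul, add_zero, one_mul]
    ring

/-- **Petz's rigidity.** Suppose the positive matrices `τ, ω` are the restrictions of `ρ, σ` to the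
subalgebra given by `φ`. If restriction preserves the relative entropy, then
`σ^{1/2} ω^{-1/2} τ^{1/2} = ρ^{1/2}`. -/
theorem petz_rigidity (φ : Matrix m m ℂ →⋆ₐ[ℂ] Matrix n n ℂ) {ρ σ : Matrix n n ℂ}
    {τ ω : Matrix m m ℂ} (hρ : ρ.PosSemidef) (hσ : σ.PosSemidef) (hτ : τ.PosSemidef)
    (hω : ω.PosSemidef) (h1 : ∀ z, (φ z * ρ).trace = (z * τ).trace)
    (h2 : ∀ z, (φ z * σ).trace = (z * ω).trace)
    (hsρ : cfc sp σ * ρ = ρ) (hsτ : cfc sp ω * τ = τ)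
    (hS : (cfc (fun x => x * Real.log x) ρ).trace - (cfc Real.log σ * ρ).trace =
      (cfc (fun x => x * Real.log x) τ).trace - (cfc Real.log ω * τ).trace) :
    cfc Real.sqrt σ * φ (cfc isq ω * cfc Real.sqrt τ) = cfc Real.sqrt ρ := by
  obtain ⟨U, r, hU, hU', hr, hfρ⟩ := exists_spectral hρ
  obtain ⟨V, s, hV, hV', hs, hfσ⟩ := exists_spectral hσ
  obtain ⟨U₁, t, hU₁, hU₁', ht, hfτ⟩ := exists_spectral hτ
  obtain ⟨V₁, w, hV₁, hV₁', hw, hfω⟩ := exists_spectral hω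
  have idρ : ρ = U * diagonal (fun i => ((r i : ℝ) : ℂ)) * Uᴴ := by
    rw [← hfρ fun x => x, cfc_self hρ fun _ _ => rfl]
  have idσ : σ = V * diagonal (fun i => ((s i : ℝ) : ℂ)) * Vᴴ := by
    rw [← hfσ fun x => x, cfc_self hσ fun _ _ => rfl]
  have idτ : τ = U₁ * diagonal (fun i => ((t i : ℝ) : ℂ)) * U₁ᴴ := by
    rw [← hfτ fun x => x, cfc_self hτ fun _ _ => rfl]
  have idω : ω = V₁ * diagonal (fun i => ((w i : ℝ) : ℂ)) * V₁ᴴ := by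
    rw [← hfω fun x => x, cfc_self hω fun _ _ => rfl]
  let a : n × n → ℝ := fun p => Complex.normSq ((Vᴴ * U) p.1 p.2) * r p.2
  let b : m × m → ℝ := fun p => Complex.normSq ((V₁ᴴ * U₁) p.1 p.2) * t p.2
  have ha : ∀ u, (dop V s U r (kern u) * ρ).trace =
      ((∑ p : n × n, a p * (r p.2 / ((1 - u) * s p.1 + u * r p.2)) : ℝ) : ℂ) := by
    intro u
    rw [dop_mul hU' (f := fun x => x) idρ, trace_dop]
    congr 1
    refine Finset.sum_congr rfl fun p _ => ?_
    simp only [a, kern]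
    ring
  have hb : ∀ u, (dop V₁ w U₁ t (kern u) * τ).trace =
      ((∑ p : m × m, b p * (t p.2 / ((1 - u) * w p.1 + u * t p.2)) : ℝ) : ℂ) := by
    intro u
    rw [dop_mul hU₁' (f := fun x => x) idτ, trace_dop]
    congr 1
    refine Finset.sum_congr rfl fun p _ => ?_
    simp only [b, kern]
    ring
  have hdef := fun (u : ℝ) (hu0 : 0 < u) (hu1 : u < 1) =>
    defect φ hρ hσ hτ h1 h2 hu0 hu1 (sylvester hV hV' hU hU' idρ idσ hr hs hu0 hu1)
      (sylvester hV₁ hV₁' hU₁ hU₁' idτ idω ht hw hu0 hu1) (ha u) (hb u)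
  have hpa := support_pos hU' hV' hr hs hfσ idρ hsρ
  have hpb := support_pos hU₁' hV₁' ht hw hfω idτ hsτ
  have hsum : ∑ p, a p = ∑ p, b p := by
    have e1 : ρ.trace = ((∑ p, a p : ℝ) : ℂ) := by
      conv_lhs => rw [← dop_snd (s := s) hV hU hU' idρ]
      rw [trace_dop]
    have e2 : τ.trace = ((∑ p, b p : ℝ) : ℂ) := by
      conv_lhs => rw [← dop_snd (s := w) hV₁ hU₁ hU₁' idτ]
      rw [trace_dop]
    have e3 := h1 1
    rw [map_one, Matrix.one_mul, Matrix.one_mul, e1, e2] at e3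
    exact_mod_cast e3
  have hend : interp a (fun p => s p.1) (fun p => r p.2) 1 -
      interp a (fun p => s p.1) (fun p => r p.2) 0 =
      interp b (fun p => w p.1) (fun p => t p.2) 1 -
      interp b (fun p => w p.1) (fun p => t p.2) 0 := by
    have e1 := interp_ends hU hU' hV hV' hfσ hfρ idρ
    have e2 := interp_ends hU₁ hU₁' hV₁ hV₁' hfω hfτ idτ
    rw [e1.1, e1.2, e2.1, e2.2] at hS
    exact_mod_cast hS
  have hrig := fun (u : ℝ) (hu0 : 0 < u) (hu1 : u < 1) =>
    (hdef u hu0 hu1).2 (interp_rigid a (fun p => s p.1) (fun p => r p.2) b (fun p => w p.1)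
      (fun p => t p.2) hpa hpb hsum (fun u hu0 hu1 => (hdef u hu0 hu1).1) hend hu0 hu1)
  -- pass from the kernels `kern u` to the square root
  have hsq : φ (cfc isq ω * cfc Real.sqrt τ) * ρ = cfc isq σ * cfc Real.sqrt ρ * ρ := by
    have d1 : cfc isq σ * cfc Real.sqrt ρ = dop V s U r (fun x y => isq x * √y) := by
      have := mul_dop (U := U) (r := r) (F := fun _ _ => 1) hV' (f := isq) (hfσ isq)
      rw [dop_one hV hU, Matrix.mul_one] at this
      rw [this, dop_mul hU' (f := Real.sqrt) (hfρ Real.sqrt)]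
      exact dop_congr fun _ _ => by ring
    have d2 : cfc isq ω * cfc Real.sqrt τ = dop V₁ w U₁ t (fun x y => isq x * √y) := by
      have := mul_dop (U := U₁) (r := t) (F := fun _ _ => 1) hV₁' (f := isq) (hfω isq)
      rw [dop_one hV₁ hU₁, Matrix.mul_one] at this
      rw [this, dop_mul hU₁' (f := Real.sqrt) (hfτ Real.sqrt)]
      exact dop_congr fun _ _ => by ring
    rw [d1, d2]
    let E : m × m → Matrix n n ℂ := fun p =>
      φ (Matrix.of (fun x y => V₁ x p.1 * (V₁ᴴ * U₁) p.1 p.2 * U₁ᴴ p.2 y)) * ρ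
    let E' : n × n → Matrix n n ℂ := fun p =>
      Matrix.of (fun x y => V x p.1 * (Vᴴ * U) p.1 p.2 * Uᴴ p.2 y) * ρ
    have x1 : ∀ F, φ (dop V₁ w U₁ t F) * ρ = ∑ p, ((F (w p.1) (t p.2) : ℝ) : ℂ) • E p := by
      intro F
      rw [dop_apply, map_sum, Finset.sum_mul]
      exact Finset.sum_congr rfl fun p _ => by rw [map_smul, Matrix.smul_mul]
    have x2 : ∀ F, dop V s U r F * ρ = ∑ p, ((F (s p.1) (r p.2) : ℝ) : ℂ) • E' p := by
      intro F
      rw [dop_apply, Finset.sum_mul]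
      exact Finset.sum_congr rfl fun p _ => by rw [Matrix.smul_mul]
    ext x y
    let A : (m × m) ⊕ (n × n) → ℂ := Sum.elim (fun p => E p x y) (fun p => - E' p x y)
    let tt : (m × m) ⊕ (n × n) → ℝ := Sum.elim (fun p => t p.2) (fun p => r p.2)
    let ww : (m × m) ⊕ (n × n) → ℝ := Sum.elim (fun p => w p.1) (fun p => s p.1)
    have conv : ∀ F : ℝ → ℝ → ℝ, ∑ i, A i * ((F (ww i) (tt i) : ℝ) : ℂ) =
        (φ (dop V₁ w U₁ t F) * ρ) x y - (dop V s U r F * ρ) x y := by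
      intro F
      rw [x1, x2, Fintype.sum_sum_type, Matrix.sum_apply, Matrix.sum_apply, sub_eq_add_neg,
        ← Finset.sum_neg_distrib]
      congr 1
      · refine Finset.sum_congr rfl fun p _ => ?_
        simp only [A, ww, tt, Sum.elim_inl, Matrix.smul_apply, smul_eq_mul]
        ring
      · refine Finset.sum_congr rfl fun p _ => ?_
        simp only [A, ww, tt, Sum.elim_inr, Matrix.smul_apply, smul_eq_mul]
        ring
    have fin := sum_sqrt_eq_zero A tt ww
      (by rintro (p | p) <;> simp [tt, ht, hr]) (by rintro (p | p) <;> simp [ww, hw, hs])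
      (fun u hu0 hu1 => by
        have := conv (kern u)
        rw [hrig u hu0 hu1, sub_self] at this
        exact this)
    have := conv (fun x y => isq x * √y)
    rw [fin] at this
    exact (sub_eq_zero.1 this.symm)
  -- `K` agrees with `ρ^{1/2}` on the support of `ρ` (`hKρ`) and has the same Hilbert–Schmidt norm
  -- (`hKK`), so the two are equal
  set K := cfc Real.sqrt σ * φ (cfc isq ω * cfc Real.sqrt τ) with hK
  have hspρ : cfc sp σ * cfc Real.sqrt ρ = cfc Real.sqrt ρ := by
    have : (1 - cfc sp σ) * ρ = 0 := by rw [Matrix.sub_mul, hsρ, Matrix.one_mul, sub_self]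
    have := (mul_sqrt_eq_zero_iff hρ).2 this
    rw [Matrix.sub_mul, Matrix.one_mul, sub_eq_zero] at this
    exact this.symm
  have hKρ : (K - cfc Real.sqrt ρ) * cfc Real.sqrt ρ = 0 := by
    apply (mul_sqrt_eq_zero_iff hρ).2
    rw [Matrix.sub_mul, hK, Matrix.mul_assoc, hsq, ← Matrix.mul_assoc, ← Matrix.mul_assoc,
      sqrt_mul_isq hσ, hspρ, sub_self]
  have hKK : (Kᴴ * K).trace = ρ.trace := by
    have e0 : Kᴴ = φ (cfc Real.sqrt τ * cfc isq ω) * cfc Real.sqrt σ := by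
      rw [hK, conjTranspose_mul, cfc_conjTranspose]
      congr 1
      rw [← star_eq_conjTranspose, ← map_star, star_mul]
      simp only [star_eq_conjTranspose, cfc_conjTranspose]
    rw [e0, hK, Matrix.mul_assoc, ← Matrix.mul_assoc (cfc Real.sqrt σ), sqrt_mul_sqrt_cfc hσ,
      ← Matrix.mul_assoc, trace_mul_comm, ← Matrix.mul_assoc, ← map_mul, h2]
    have e1 := h1 1
    rw [map_one, Matrix.one_mul, Matrix.one_mul] at e1
    rw [e1]
    calc _ = ((cfc Real.sqrt τ * cfc Real.sqrt τ) * (cfc isq ω * ω * cfc isq ω)).trace := by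
          simp only [Matrix.mul_assoc]
          rw [trace_mul_comm]
          simp only [Matrix.mul_assoc]
      _ = τ.trace := by
          rw [sqrt_mul_sqrt_cfc hτ, isq_mul_isq_mul hω, trace_mul_comm, hsτ]
  rw [← sub_eq_zero, ← Matrix.trace_conjTranspose_mul_self_eq_zero_iff]
  have e2 : (cfc Real.sqrt ρ * (K - cfc Real.sqrt ρ)).trace = 0 := by
    rw [trace_mul_comm, hKρ, trace_zero]
  have e3 : (Kᴴ * cfc Real.sqrt ρ).trace = ρ.trace := by
    have := congrArg conjTranspose hKρ
    rw [conjTranspose_mul, conjTranspose_sub, cfc_conjTranspose, Matrix.mul_sub,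
      sqrt_mul_sqrt_cfc hρ, conjTranspose_zero, sub_eq_zero] at this
    rw [trace_mul_comm, this]
  rw [conjTranspose_sub, cfc_conjTranspose, Matrix.sub_mul, trace_sub, e2, Matrix.mul_sub,
    trace_sub, hKK, e3]
  ring
end Petz

/-! ### Equality in strong subadditivity -/

section PetzEntropy

set_option linter.unusedSectionVars false

variable {n m l q : Type*} [Fintype n] [DecidableEq n] [Fintype m] [DecidableEq m]
  [Fintype l] [DecidableEq l] [Fintype q] [DecidableEq q]

lemma map_conjTranspose (φ : Matrix m m ℂ →⋆ₐ[ℂ] Matrix n n ℂ) (x : Matrix m m ℂ) :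
    φ xᴴ = (φ x)ᴴ := map_star φ x

lemma trace_cfc_mul_log {M : Matrix n n ℂ} (hM : M.PosSemidef) :
    (cfc (fun x => x * Real.log x) M).trace = ((-(vNEntropy M * Real.log 2) : ℝ) : ℂ) := by
  obtain ⟨U, r, hU, hU', hr, hf⟩ := exists_spectral hM
  have idM : M = U * diagonal (fun i => ((r i : ℝ) : ℂ)) * Uᴴ := by
    rw [← hf fun x => x, cfc_self hM fun _ _ => rfl]
  rw [vNEntropy_diag r hU' idM, neg_neg, hf, trace_mul_comm, ← Matrix.mul_assoc, hU',
    Matrix.one_mul, trace_diagonal]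
  push_cast
  rfl

lemma cfc_log_mul_self {M : Matrix n n ℂ} (hM : M.PosSemidef) :
    cfc Real.log M * M = cfc (fun x => x * Real.log x) M := by
  nth_rewrite 2 [← cfc_self hM (f := fun x => x) (fun _ _ => rfl)]
  rw [cfc_mul_cfc]
  simp only [mul_comm]

lemma map_posSemidef (φ : Matrix m m ℂ →⋆ₐ[ℂ] Matrix n n ℂ) {x : Matrix m m ℂ}
    (hx : x.PosSemidef) : (φ x).PosSemidef := by
  have : φ x = (φ (cfc Real.sqrt x))ᴴ * φ (cfc Real.sqrt x) := by
    rw [← map_conjTranspose, cfc_conjTranspose, ← map_mul, sqrt_mul_sqrt_cfc hx]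
  rw [this]
  exact posSemidef_conjTranspose_mul_self _

lemma sp_mul_sp (M : Matrix n n ℂ) : cfc sp M * cfc sp M = cfc sp M := by
  rw [cfc_mul_cfc]
  congr 1
  ext x
  by_cases h : x = 0 <;> simp [sp, h]

/-- The support of a state is contained in the support of its marginal. -/
lemma support_marginal (ψ : Matrix l l ℂ →⋆ₐ[ℂ] Matrix n n ℂ) {ρ : Matrix n n ℂ}
    {κ : Matrix l l ℂ} (hρ : ρ.PosSemidef) (hκ : κ.PosSemidef)
    (h : ∀ x, (ψ x * ρ).trace = (x * κ).trace) : ψ (cfc sp κ) * ρ = ρ := by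
  have h0 : ψ (1 - cfc sp κ) * ρ = 0 := by
    apply mul_eq_zero_of_trace hρ
    rw [← map_conjTranspose, ← map_mul, h, conjTranspose_sub, conjTranspose_one, cfc_conjTranspose,
      Matrix.mul_assoc, Matrix.sub_mul _ _ κ, sp_mul_self hκ, Matrix.one_mul, sub_self,
      Matrix.mul_zero, trace_zero]
  rw [map_sub, map_one, Matrix.sub_mul, Matrix.one_mul, sub_eq_zero] at h0
  exact h0.symm

/-- Equality in strong subadditivity determines the state from its marginals: with `ρ` on `XYZ`,
`τ`, `κ`, `η` the marginals on `XY`, `YZ`, `Y`, one has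
`κ^{1/2} η^{-1/2} τ^{1/2} = ρ^{1/2}`. -/
theorem petz_entropy (φ : Matrix m m ℂ →⋆ₐ[ℂ] Matrix n n ℂ) (ψ : Matrix l l ℂ →⋆ₐ[ℂ] Matrix n n ℂ)
    (χ : Matrix q q ℂ →⋆ₐ[ℂ] Matrix m m ℂ) {ρ : Matrix n n ℂ} {τ : Matrix m m ℂ}
    {κ : Matrix l l ℂ} {η : Matrix q q ℂ} (hρ : ρ.PosSemidef) (hτ : τ.PosSemidef)
    (hκ : κ.PosSemidef) (hη : η.PosSemidef)
    (h1 : ∀ z, (φ z * ρ).trace = (z * τ).trace)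
    (h2 : ∀ z, (φ z * ψ κ).trace = (z * χ η).trace)
    (h3 : ∀ x, (ψ x * ρ).trace = (x * κ).trace)
    (h4 : ∀ x, (χ x * τ).trace = (x * η).trace)
    (hS : vNEntropy τ + vNEntropy κ - vNEntropy η - vNEntropy ρ = 0) :
    ψ (cfc Real.sqrt κ) * φ (χ (cfc isq η) * cfc Real.sqrt τ) = cfc Real.sqrt ρ := by
  have := petz_rigidity φ hρ (map_posSemidef ψ hκ) hτ (map_posSemidef χ hη) h1 h2
    (by rw [← map_cfc_matrix ψ sp hκ.1, support_marginal ψ hρ hκ h3])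
    (by rw [← map_cfc_matrix χ sp hη.1, support_marginal χ hτ hη h4])
    (by
      rw [← map_cfc_matrix ψ _ hκ.1, ← map_cfc_matrix χ _ hη.1, h3, h4, cfc_log_mul_self hκ,
        cfc_log_mul_self hη, trace_cfc_mul_log hρ, trace_cfc_mul_log hτ, trace_cfc_mul_log hκ,
        trace_cfc_mul_log hη]
      norm_cast
      linear_combination Real.log 2 * hS)
  rwa [← map_cfc_matrix ψ _ hκ.1, ← map_cfc_matrix χ _ hη.1] at this

end PetzEntropy

/-! ### Embeddings of subsystems and partial traces -/

section Embed

set_option linter.unusedSectionVars false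

variable {N M K : Type*} [Fintype N] [DecidableEq N] [Fintype M] [DecidableEq M] [Fintype K]
  [DecidableEq K]

open scoped Kronecker in
/-- The embedding `x ↦ x ⊗ 1` of the matrices of a subsystem `M`, where `e` identifies the index
set `N` of the whole system with `M × K`. -/
noncomputable def emb (e : N ≃ M × K) : Matrix M M ℂ →⋆ₐ[ℂ] Matrix N N ℂ where
  toFun x := (x ⊗ₖ (1 : Matrix K K ℂ)).submatrix e e
  map_one' := by simp
  map_mul' x y := by
    rw [submatrix_mul_equiv, ← mul_kronecker_mul, Matrix.one_mul]
  map_zero' := by simp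
  map_add' x y := by simp [add_kronecker, submatrix_add]
  commutes' c := by
    rw [Algebra.algebraMap_eq_smul_one, Algebra.algebraMap_eq_smul_one, smul_kronecker,
      one_kronecker_one]
    ext i j
    simp [Matrix.one_apply]
  map_star' x := by
    simp [star_eq_conjTranspose, conjTranspose_kronecker]

lemma emb_apply (e : N ≃ M × K) (x : Matrix M M ℂ) (i j : N) :
    emb e x i j = if (e i).2 = (e j).2 then x (e i).1 (e j).1 else 0 := by
  change x (e i).1 (e j).1 * (1 : Matrix K K ℂ) (e i).2 (e j).2 = _
  simp [Matrix.one_apply]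

/-- The block of `R` at position `(k, l)` in the tensor factor `K`. -/
def slice (e : N ≃ M × K) (k l : K) (R : Matrix N N ℂ) : Matrix M M ℂ :=
  Matrix.of fun i j => R (e.symm (i, k)) (e.symm (j, l))

/-- The partial trace over `K`. -/
def ptr (e : N ≃ M × K) (R : Matrix N N ℂ) : Matrix M M ℂ :=
  Matrix.of fun i j => ∑ k, R (e.symm (i, k)) (e.symm (j, k))

lemma ptr_eq_sum (e : N ≃ M × K) (R : Matrix N N ℂ) : ptr e R = ∑ k, slice e k k R := by
  ext i j
  simp [ptr, slice, Matrix.sum_apply]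

lemma slice_mul (e : N ≃ M × K) (R T : Matrix N N ℂ) (k k' : K) :
    slice e k k' (R * T) = ∑ j, slice e k j R * slice e j k' T := by
  ext i i'
  simp only [slice, Matrix.mul_apply, Matrix.sum_apply, of_apply]
  rw [← e.symm.sum_comp, Fintype.sum_prod_type, Finset.sum_comm]

lemma slice_emb (e : N ≃ M × K) (x : Matrix M M ℂ) (k k' : K) :
    slice e k k' (emb e x) = if k = k' then x else 0 := by
  ext i j
  by_cases h : k = k' <;> simp [slice, emb_apply, h]

lemma slice_conjTranspose (e : N ≃ M × K) (R : Matrix N N ℂ) (k k' : K) :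
    slice e k k' Rᴴ = (slice e k' k R)ᴴ := by
  ext i j
  simp [slice]

lemma slice_mul_emb (e : N ≃ M × K) (R : Matrix N N ℂ) (x : Matrix M M ℂ) (k k' : K) :
    slice e k k' (R * emb e x) = slice e k k' R * x := by
  rw [slice_mul, Finset.sum_eq_single k']
  · rw [slice_emb, if_pos rfl]
  · intro j _ hj
    rw [slice_emb, if_neg hj, Matrix.mul_zero]
  · simp

lemma slice_emb_mul (e : N ≃ M × K) (R : Matrix N N ℂ) (x : Matrix M M ℂ) (k k' : K) :
    slice e k k' (emb e x * R) = x * slice e k k' R := by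
  rw [slice_mul, Finset.sum_eq_single k]
  · rw [slice_emb, if_pos rfl]
  · intro j _ hj
    rw [slice_emb, if_neg hj.symm, Matrix.zero_mul]
  · simp

lemma ptr_emb_mul (e : N ≃ M × K) (x : Matrix M M ℂ) (R : Matrix N N ℂ) :
    ptr e (emb e x * R) = x * ptr e R := by
  simp only [ptr_eq_sum, slice_emb_mul, Finset.mul_sum]

lemma ptr_mul_emb (e : N ≃ M × K) (x : Matrix M M ℂ) (R : Matrix N N ℂ) :
    ptr e (R * emb e x) = ptr e R * x := by
  simp only [ptr_eq_sum, slice_mul_emb, Finset.sum_mul]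

lemma trace_ptr (e : N ≃ M × K) (R : Matrix N N ℂ) : (ptr e R).trace = R.trace := by
  simp only [Matrix.trace, ptr, diag_apply, of_apply]
  rw [← e.symm.sum_comp, Fintype.sum_prod_type]

lemma trace_emb_mul (e : N ≃ M × K) (x : Matrix M M ℂ) (R : Matrix N N ℂ) :
    (emb e x * R).trace = (x * ptr e R).trace := by
  rw [← trace_ptr e, ptr_emb_mul]

lemma ptr_posSemidef (e : N ≃ M × K) {R : Matrix N N ℂ} (hR : R.PosSemidef) :
    (ptr e R).PosSemidef := by
  rw [ptr_eq_sum]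
  exact posSemidef_sum _ fun k _ => hR.submatrix fun i => e.symm (i, k)

lemma ptr_zero (e : N ≃ M × K) : ptr e 0 = 0 := by
  ext i j
  simp [ptr]

end Embed

/-! ### Simultaneous diagonalization -/

section SimDiag

variable {B : Type*} [Fintype B] [DecidableEq B]

/-- Commuting Hermitian matrices are simultaneously unitarily diagonalizable. -/
lemma simDiag_hermitian {ι : Type*} (H : ι → Matrix B B ℂ) (hH : ∀ i, (H i).IsHermitian)
    (hc : ∀ i j, H i * H j = H j * H i) :
    ∃ (U : Matrix B B ℂ) (d : ι → B → ℂ), U * Uᴴ = 1 ∧ Uᴴ * U = 1 ∧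
      ∀ i, H i = U * diagonal (d i) * Uᴴ := by
  classical
  let T : ι → EuclideanSpace ℂ B →ₗ[ℂ] EuclideanSpace ℂ B := fun i => (H i).toEuclideanLin
  have hT : ∀ i, (T i).IsSymmetric := fun i => isSymmetric_toEuclideanLin_iff.2 (hH i)
  have hTc : Pairwise (Function.onFun Commute T) := by
    intro i j _
    change T i * T j = T j * T i
    ext1 v
    simp only [Module.End.mul_apply, T, toLpLin_apply, mulVec_mulVec, hc i j]
  have hInternal := LinearMap.IsSymmetric.directSum_isInternal_of_pairwise_commute hT hTc
  have hort := LinearMap.IsSymmetric.orthogonalFamily_iInf_eigenspaces hT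
  have hInternal' := DirectSum.isInternal_ne_bot_iff.2 hInternal
  have hfin : Finite {γ : ι → ℂ // (⨅ j, Module.End.eigenspace (T j) (γ j)) ≠ ⊥} :=
    (WellFoundedGT.finite_ne_bot_of_iSupIndep hort.independent).to_subtype
  have : Fintype {γ : ι → ℂ // (⨅ j, Module.End.eigenspace (T j) (γ j)) ≠ ⊥} :=
    Fintype.ofFinite _
  have hort' := hort.comp (Subtype.val_injective
    (p := fun γ : ι → ℂ => (⨅ j, Module.End.eigenspace (T j) (γ j)) ≠ ⊥))
  let b := (hInternal'.subordinateOrthonormalBasis (n := Fintype.card B) (by simp) hort').reindex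
    (Fintype.equivFin B).symm
  have hb : ∀ x : B, ∃ γ : ι → ℂ, ∀ j, T j (b x) = γ j • b x := by
    intro x
    have h := hInternal'.subordinateOrthonormalBasis_subordinate (n := Fintype.card B) (by simp)
      (Fintype.equivFin B x) hort'
    refine ⟨(hInternal'.subordinateOrthonormalBasisIndex (n := Fintype.card B) (by simp)
      (Fintype.equivFin B x) hort').1, fun j => ?_⟩
    have h' := Module.End.mem_eigenspace_iff.1 ((Submodule.mem_iInf _).1 h j)
    simpa only [b, OrthonormalBasis.reindex_apply, Equiv.symm_symm] using h'
  choose γ hγ using hb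
  let U : Matrix B B ℂ := Matrix.of fun k x => b x k
  have hU : Uᴴ * U = 1 := by
    ext x y
    have := (orthonormal_iff_ite.1 b.orthonormal) x y
    rw [Matrix.one_apply, ← this, Matrix.mul_apply, PiLp.inner_apply]
    refine Finset.sum_congr rfl fun k _ => ?_
    simp [U, mul_comm]
  have hU' : U * Uᴴ = 1 := mul_eq_one_comm.1 hU
  refine ⟨U, fun i x => γ x i, hU', hU, fun i => ?_⟩
  have key : H i * U = U * diagonal (fun x => γ x i) := by
    ext k x
    have := congrArg (fun v : EuclideanSpace ℂ B => v k) (hγ x i)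
    simp only [T, toLpLin_apply] at this
    rw [mul_diagonal, Matrix.mul_apply]
    simp only [U, of_apply]
    rw [mul_comm]
    exact this
  rw [← key, Matrix.mul_assoc, hU', Matrix.mul_one]

/-- Commuting normal matrices are simultaneously unitarily diagonalizable. -/
lemma simDiag {ι : Type*} (M : ι → Matrix B B ℂ) (hc : ∀ i j, M i * M j = M j * M i)
    (hc' : ∀ i j, M i * (M j)ᴴ = (M j)ᴴ * M i) :
    ∃ (U : Matrix B B ℂ) (d : ι → B → ℂ), U * Uᴴ = 1 ∧ Uᴴ * U = 1 ∧
      ∀ i, M i = U * diagonal (d i) * Uᴴ := by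
  have hc'' : ∀ i j, (M i)ᴴ * (M j)ᴴ = (M j)ᴴ * (M i)ᴴ := fun i j => by
    rw [← conjTranspose_mul, ← conjTranspose_mul, hc]
  obtain ⟨U, d, hU, hU', hd⟩ := simDiag_hermitian
    (fun i : ι ⊕ ι => Sum.elim (fun i => M i + (M i)ᴴ) (fun i => Complex.I • (M i - (M i)ᴴ)) i)
    (by
      rintro (i | i)
      · simp [IsHermitian, add_comm]
      · simp only [IsHermitian, Sum.elim_inr, conjTranspose_smul, conjTranspose_sub,
          conjTranspose_conjTranspose, RCLike.star_def, Complex.conj_I]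
        module)
    (by
      rintro (i | i) (j | j) <;>
      simp only [Sum.elim_inl, Sum.elim_inr, Matrix.smul_mul, Matrix.mul_smul, Matrix.add_mul,
        Matrix.mul_add, Matrix.sub_mul, Matrix.mul_sub, hc i j, hc' i j, hc'' i j, hc' j i] <;>
      module)
  refine ⟨U, fun i x => (1 / 2 : ℂ) * (d (Sum.inl i) x - Complex.I * d (Sum.inr i) x), hU, hU',
    fun i => ?_⟩
  have h1 := hd (Sum.inl i)
  have h2 := hd (Sum.inr i)
  simp only [Sum.elim_inl, Sum.elim_inr] at h1 h2
  have h3 : M i = (1 / 2 : ℂ) • ((M i + (M i)ᴴ) - Complex.I • (Complex.I • (M i - (M i)ᴴ))) := by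
    rw [smul_smul, Complex.I_mul_I]
    module
  rw [h3, h1, h2, ← Matrix.smul_mul, ← Matrix.mul_smul, ← Matrix.sub_mul, ← Matrix.mul_sub,
    ← Matrix.smul_mul, ← Matrix.mul_smul]
  congr 2
  ext x y
  by_cases h : x = y <;> simp [h]

end SimDiag

/-! ### Fixed points and fourth roots -/

section DoubleMarkov

set_option linter.unusedSectionVars false

variable {N B C : Type*} [Fintype N] [DecidableEq N] [Fintype B] [DecidableEq B]
  [Fintype C] [DecidableEq C]

lemma conj_mul_conj {U : Matrix B B ℂ} (hU : Uᴴ * U = 1) (X Y : Matrix B B ℂ) :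
    (U * X * Uᴴ) * (U * Y * Uᴴ) = U * (X * Y) * Uᴴ := by
  calc _ = U * X * (Uᴴ * U) * Y * Uᴴ := by simp only [Matrix.mul_assoc]
    _ = _ := by rw [hU, Matrix.mul_one, Matrix.mul_assoc U]

lemma conj_diag_mul {U : Matrix B B ℂ} (hU : Uᴴ * U = 1) (f g : B → ℂ) :
    (U * diagonal f * Uᴴ) * (U * diagonal g * Uᴴ) = U * diagonal (fun b => f b * g b) * Uᴴ := by
  rw [conj_mul_conj hU, diagonal_mul_diagonal]

lemma conj_cancel {U : Matrix B B ℂ} (hU : U * Uᴴ = 1) (X : Matrix B B ℂ) :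
    U * (Uᴴ * X * U) * Uᴴ = X := by
  calc _ = (U * Uᴴ) * X * (U * Uᴴ) := by simp only [Matrix.mul_assoc]
    _ = _ := by rw [hU, Matrix.mul_one, Matrix.one_mul]

lemma conj_cancel' {U : Matrix B B ℂ} (hU : Uᴴ * U = 1) (X : Matrix B B ℂ) :
    Uᴴ * (U * X * Uᴴ) * U = X := by
  calc _ = (Uᴴ * U) * X * (Uᴴ * U) := by simp only [Matrix.mul_assoc]
    _ = _ := by rw [hU, Matrix.mul_one, Matrix.one_mul]

lemma conj_inj {U : Matrix B B ℂ} (hU : Uᴴ * U = 1) {X Y : Matrix B B ℂ}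
    (h : U * X * Uᴴ = U * Y * Uᴴ) : X = Y := by
  rw [← conj_cancel' hU X, h, conj_cancel' hU]

lemma commute_cfc_of_commute {M X : Matrix B B ℂ} (hM : M.PosSemidef) {f g : ℝ → ℝ}
    (hfg : ∀ x y, 0 ≤ x → 0 ≤ y → f x = f y → g x = g y)
    (h : X * cfc f M = cfc f M * X) : X * cfc g M = cfc g M * X := by
  obtain ⟨U, r, hU, hU', hr, hf⟩ := exists_spectral hM
  rw [hf] at h ⊢
  rw [← conj_cancel hU X, conj_mul_conj hU', conj_mul_conj hU'] at h ⊢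
  have h' := conj_inj hU' h
  congr 2
  ext i j
  have hij := congrFun (congrFun h' i) j
  rw [mul_diagonal, diagonal_mul] at hij ⊢
  by_cases e : f (r i) = f (r j)
  · rw [hfg _ _ (hr i) (hr j) e, mul_comm]
  · have : (Uᴴ * X * U) i j = 0 := by
      have e' : ((f (r i) : ℝ) : ℂ) - ((f (r j) : ℝ) : ℂ) ≠ 0 := by
        rw [sub_ne_zero]
        exact_mod_cast e
      refine (mul_eq_zero.1 ?_).resolve_left e'
      linear_combination -hij
    rw [this]
    ring

/-- A vanishing diagonal entry of a positive matrix forces its row to vanish. -/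
lemma posSemidef_zero_of_diag {w : Matrix B B ℂ} (hw : w.PosSemidef) {b : B} (h : w b b = 0)
    (b' : B) : w b b' = 0 := by
  have h1 : ∀ k, cfc Real.sqrt w b k = 0 := by
    have h2 := sqrt_mul_sqrt_cfc hw
    nth_rewrite 2 [← cfc_conjTranspose Real.sqrt w] at h2
    have h3 := congrFun (congrFun h2 b) b
    rw [h, Matrix.mul_apply] at h3
    simp only [conjTranspose_apply, RCLike.star_def, Complex.mul_conj] at h3
    norm_cast at h3
    intro k
    have := (Finset.sum_eq_zero_iff_of_nonneg (fun i _ => Complex.normSq_nonneg _)).1 h3 k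
      (Finset.mem_univ _)
    exact Complex.normSq_eq_zero.1 this
  rw [← sqrt_mul_sqrt_cfc hw, Matrix.mul_apply]
  exact Finset.sum_eq_zero fun k _ => by rw [h1, zero_mul]

/-- A positive fixed point `w` of the map `w ↦ ∑ diag(m k l) w diag(m l k)` connects only indices
with equal `m`: for two such indices, the Hilbert–Schmidt inner products of
the matrices `m` with themselves and with each other all equal `1`. -/
lemma fixed_point {m : B → Matrix C C ℂ} (hm : ∀ b, (m b).IsHermitian) {w : Matrix B B ℂ}
    (hw : w.PosSemidef)
    (h : ∑ k, ∑ l, diagonal (fun b => m b k l) * w * diagonal (fun b => m b l k) = w)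
    {b b' : B} (hb : w b b' ≠ 0) : m b = m b' := by
  have key : ∀ x y, w x y ≠ 0 → (m x * m y).trace = 1 := by
    intro x y hxy
    have e := congrFun (congrFun h x) y
    simp only [Matrix.sum_apply, mul_diagonal, diagonal_mul] at e
    have e2 : (m x * m y).trace * w x y = w x y := by
      conv_rhs => rw [← e]
      simp only [Matrix.trace, diag_apply, Matrix.mul_apply, Finset.sum_mul]
      exact Finset.sum_congr rfl fun k _ => Finset.sum_congr rfl fun l _ => by ring
    exact mul_right_cancel₀ hxy (by rw [e2, one_mul])
  have hb' : w b' b ≠ 0 := by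
    rw [← hw.1.apply]
    simpa using hb
  have h1 : w b b ≠ 0 := fun h0 => hb (posSemidef_zero_of_diag hw h0 b')
  have h2 : w b' b' ≠ 0 := fun h0 => hb' (posSemidef_zero_of_diag hw h0 b)
  have h3 : ((m b - m b')ᴴ * (m b - m b')).trace = 0 := by
    rw [((hm b).sub (hm b')).eq, Matrix.sub_mul, Matrix.mul_sub, Matrix.mul_sub, trace_sub,
      trace_sub, trace_sub, key _ _ hb, key _ _ hb', key _ _ h1, key _ _ h2]
    ring
  exact sub_eq_zero.1 (trace_conjTranspose_mul_self_eq_zero_iff.1 h3)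

/-- The fourth root. -/
noncomputable def qrt (x : ℝ) : ℝ := √√x

/-- The inverse fourth root, with value `0` at `0`. -/
noncomputable def iqrt (x : ℝ) : ℝ := (√√x)⁻¹

lemma qrt_mul_qrt (M : Matrix B B ℂ) : cfc qrt M * cfc qrt M = cfc Real.sqrt M := by
  rw [cfc_mul_cfc]
  congr 1
  ext x
  exact Real.mul_self_sqrt (Real.sqrt_nonneg x)

lemma iqrt_mul_iqrt (M : Matrix B B ℂ) : cfc iqrt M * cfc iqrt M = cfc isq M := by
  rw [cfc_mul_cfc]
  congr 1
  ext x
  rw [iqrt, isq, ← mul_inv, Real.mul_self_sqrt (Real.sqrt_nonneg x)]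

lemma qrt_ne_zero {x : ℝ} (hx : 0 ≤ x) (h : x ≠ 0) : √√x ≠ 0 :=
  (Real.sqrt_pos.2 (Real.sqrt_pos.2 (lt_of_le_of_ne hx h.symm))).ne'

lemma qrt_mul_iqrt {M : Matrix B B ℂ} (hM : M.PosSemidef) : cfc qrt M * cfc iqrt M = cfc sp M := by
  rw [cfc_mul_cfc]
  refine cfc_congr_nonneg hM fun x hx => ?_
  by_cases h : x = 0
  · simp [qrt, sp, h]
  · rw [qrt, iqrt, mul_inv_cancel₀ (qrt_ne_zero hx h), sp, if_neg h]

lemma iqrt_mul_qrt {M : Matrix B B ℂ} (hM : M.PosSemidef) : cfc iqrt M * cfc qrt M = cfc sp M := by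
  rw [← qrt_mul_iqrt hM, cfc_mul_cfc, cfc_mul_cfc]
  simp only [mul_comm]

lemma isq_mul_qrt {M : Matrix B B ℂ} (hM : M.PosSemidef) : cfc isq M * cfc qrt M = cfc iqrt M := by
  rw [cfc_mul_cfc]
  refine cfc_congr_nonneg hM fun x hx => ?_
  by_cases h : x = 0
  · simp [qrt, iqrt, h]
  · rw [qrt, iqrt, isq, ← Real.mul_self_sqrt (Real.sqrt_nonneg x), mul_inv, mul_assoc,
      Real.mul_self_sqrt (Real.sqrt_nonneg x), inv_mul_cancel₀ (qrt_ne_zero hx h), mul_one]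

lemma qrt_mul_isq {M : Matrix B B ℂ} (hM : M.PosSemidef) : cfc qrt M * cfc isq M = cfc iqrt M := by
  rw [← isq_mul_qrt hM, cfc_mul_cfc, cfc_mul_cfc]
  simp only [mul_comm]

lemma sp_mul_iqrt {M : Matrix B B ℂ} (hM : M.PosSemidef) : cfc sp M * cfc iqrt M = cfc iqrt M := by
  rw [cfc_mul_cfc]
  refine cfc_congr_nonneg hM fun x hx => ?_
  by_cases h : x = 0
  · simp [sp, iqrt, h]
  · simp [sp, h]

lemma iqrt_mul_sp {M : Matrix B B ℂ} (hM : M.PosSemidef) : cfc iqrt M * cfc sp M = cfc iqrt M := by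
  nth_rewrite 2 [← sp_mul_iqrt hM]
  rw [cfc_mul_cfc, cfc_mul_cfc]
  simp only [mul_comm]

end DoubleMarkov

/-! ### The double Markov condition -/

section DoubleMarkov2

set_option linter.unusedSectionVars false

variable {N B C : Type*} [Fintype N] [DecidableEq N] [Fintype B] [DecidableEq B]
  [Fintype C] [DecidableEq C]

/-- If `G` is a square root of a state whose marginal on `B` is `ρ`, an operator on `B` annihilates
`G` exactly when it annihilates `ρ`. -/
lemma map_mul_eq_zero (β : Matrix B B ℂ →⋆ₐ[ℂ] Matrix N N ℂ) {G : Matrix N N ℂ} (hG : Gᴴ = G)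
    {ρ : Matrix B B ℂ} (hρ : ρ.PosSemidef) (hτ : ∀ x, (β x * (G * G)).trace = (x * ρ).trace)
    {X : Matrix B B ℂ} : β X * G = 0 ↔ X * ρ = 0 := by
  have e : ((β X * G)ᴴ * (β X * G)).trace = (Xᴴ * X * ρ).trace := by
    rw [conjTranspose_mul, hG, Matrix.mul_assoc, trace_mul_comm, ← map_conjTranspose, ← hτ, map_mul]
    simp only [Matrix.mul_assoc]
  constructor
  · intro h
    apply mul_eq_zero_of_trace hρ
    rw [← e, h, Matrix.mul_zero, trace_zero]
  · intro h
    rw [← trace_conjTranspose_mul_self_eq_zero_iff, e, Matrix.mul_assoc, h, Matrix.mul_zero,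
      trace_zero]

/-- The compressions `M k l = ρ^{-1/4} S k l ρ^{-1/4}` of the blocks of a square root: they
recover `S`, have `ρ^{1/2}` as a fixed point, and commute if the `S k l ρ^{-1/2}` commute on the
support of `ρ`. -/
lemma compress {ρ : Matrix B B ℂ} (hρ : ρ.PosSemidef) (S : C → C → Matrix B B ℂ)
    (hS : ∀ k l, (S k l)ᴴ = S l k) (hSS : ∑ k, ∑ l, S k l * S l k = ρ)
    (hX : ∀ k l k' l', (S k l * cfc isq ρ * (S k' l' * cfc isq ρ) -
      S k' l' * cfc isq ρ * (S k l * cfc isq ρ)) * ρ = 0) :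
    ∃ M : C → C → Matrix B B ℂ, (∀ k l, (M k l)ᴴ = M l k) ∧
      (∀ k l, cfc qrt ρ * M k l * cfc qrt ρ = S k l) ∧
      (∀ k l k' l', M k l * M k' l' = M k' l' * M k l) ∧
      ∑ k, ∑ l, M k l * cfc Real.sqrt ρ * M l k = cfc Real.sqrt ρ := by
  have hPS : ∀ k l, cfc sp ρ * S k l = S k l := by
    have h0 : (1 - cfc sp ρ) * ∑ k, ∑ l, S k l * S l k = 0 := by
      rw [hSS, Matrix.sub_mul, Matrix.one_mul, sp_mul_self hρ, sub_self]
    have h1 : ∑ k, ∑ l, (((1 - cfc sp ρ) * S k l) * ((1 - cfc sp ρ) * S k l)ᴴ).trace = 0 := by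
      have h2 := congrArg (fun X => (X * (1 - cfc sp ρ)).trace) h0
      simp only [Finset.mul_sum, Finset.sum_mul, trace_sum, Matrix.zero_mul, trace_zero] at h2
      rw [← h2]
      refine Finset.sum_congr rfl fun k _ => Finset.sum_congr rfl fun l _ => ?_
      rw [conjTranspose_mul, hS, conjTranspose_sub, conjTranspose_one, cfc_conjTranspose]
      simp only [Matrix.mul_assoc]
    have hnn : ∀ k l, 0 ≤ (((1 - cfc sp ρ) * S k l) * ((1 - cfc sp ρ) * S k l)ᴴ).trace :=
      fun k l => (posSemidef_self_mul_conjTranspose _).trace_nonneg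
    intro k l
    have h3 := (Finset.sum_eq_zero_iff_of_nonneg
      (fun k _ => Finset.sum_nonneg fun l _ => hnn k l)).1 h1 k (Finset.mem_univ _)
    have h4 := (Finset.sum_eq_zero_iff_of_nonneg (fun l _ => hnn k l)).1 h3 l (Finset.mem_univ _)
    have h5 := trace_mul_conjTranspose_self_eq_zero_iff.1 h4
    rw [Matrix.sub_mul, Matrix.one_mul, sub_eq_zero] at h5
    exact h5.symm
  have hSP : ∀ k l, S k l * cfc sp ρ = S k l := by
    intro k l
    have := congrArg conjTranspose (hPS l k)
    rwa [conjTranspose_mul, hS, cfc_conjTranspose] at this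
  have hQM : ∀ k l, cfc qrt ρ * (cfc iqrt ρ * S k l * cfc iqrt ρ) * cfc qrt ρ = S k l := by
    intro k l
    calc _ = (cfc qrt ρ * cfc iqrt ρ) * S k l * (cfc iqrt ρ * cfc qrt ρ) := by
          simp only [Matrix.mul_assoc]
      _ = _ := by rw [qrt_mul_iqrt hρ, iqrt_mul_qrt hρ, hPS, hSP]
  refine ⟨fun k l => cfc iqrt ρ * S k l * cfc iqrt ρ, fun k l => ?_, hQM, fun k l k' l' => ?_, ?_⟩
  · simp only [conjTranspose_mul, hS, cfc_conjTranspose, Matrix.mul_assoc]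
  · have e : ∀ k l k' l', cfc iqrt ρ * S k l * cfc iqrt ρ * (cfc iqrt ρ * S k' l' * cfc iqrt ρ) =
        cfc iqrt ρ * (S k l * cfc isq ρ * (S k' l' * cfc isq ρ)) * cfc qrt ρ := by
      intro k l k' l'
      calc _ = cfc iqrt ρ * S k l * (cfc iqrt ρ * cfc iqrt ρ) * S k' l' * cfc iqrt ρ := by
            simp only [Matrix.mul_assoc]
        _ = _ := by
            rw [iqrt_mul_iqrt, ← isq_mul_qrt hρ]
            simp only [Matrix.mul_assoc]
    rw [e, e, ← sub_eq_zero, ← Matrix.sub_mul, ← Matrix.mul_sub]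
    have h1 := (mul_sqrt_eq_zero_iff hρ).2 (hX k l k' l')
    have h2 : cfc qrt ρ = cfc Real.sqrt ρ * cfc iqrt ρ := by
      rw [← qrt_mul_qrt, Matrix.mul_assoc, qrt_mul_iqrt hρ, cfc_mul_cfc]
      refine cfc_congr_nonneg hρ fun x hx => ?_
      by_cases h : x = 0
      · simp [sp, qrt, h]
      · simp [sp, h]
    rw [Matrix.mul_assoc, h2, ← Matrix.mul_assoc _ (cfc Real.sqrt ρ), h1, Matrix.zero_mul,
      Matrix.mul_zero]
  · have h1 : cfc iqrt ρ * ρ * cfc iqrt ρ = cfc Real.sqrt ρ := by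
      nth_rewrite 2 [← cfc_self hρ (f := fun x => x) (fun _ _ => rfl)]
      rw [cfc_mul_cfc, cfc_mul_cfc]
      refine cfc_congr_nonneg hρ fun x hx => ?_
      by_cases h : x = 0
      · simp [h]
      · have h3 : x = √x * √x := (Real.mul_self_sqrt hx).symm
        have h4 : √x ≠ 0 := (Real.sqrt_pos.2 (lt_of_le_of_ne hx (Ne.symm h))).ne'
        calc iqrt x * x * iqrt x = (√√x * √√x)⁻¹ * (√x * √x) := by
              rw [iqrt, mul_inv, ← h3]; ring
          _ = √x := by
              rw [Real.mul_self_sqrt (Real.sqrt_nonneg x), inv_mul_cancel_left₀ h4]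
    have h5 : cfc iqrt ρ * (∑ k, ∑ l, S k l * S l k) * cfc iqrt ρ = cfc Real.sqrt ρ := by
      rw [hSS, h1]
    refine Eq.trans ?_ h5
    rw [Finset.mul_sum, Finset.sum_mul]
    refine Finset.sum_congr rfl fun k _ => ?_
    rw [Finset.mul_sum, Finset.sum_mul]
    refine Finset.sum_congr rfl fun l _ => ?_
    rw [← qrt_mul_qrt]
    calc _ = cfc iqrt ρ * (S k l * (cfc iqrt ρ * cfc qrt ρ)) * ((cfc qrt ρ * cfc iqrt ρ) * S l k) *
          cfc iqrt ρ := by simp only [Matrix.mul_assoc]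
      _ = _ := by
        rw [qrt_mul_iqrt hρ, iqrt_mul_qrt hρ, hSP, hPS]
        simp only [Matrix.mul_assoc]

/-- Joint diagonalization of the compressed blocks with the marginal. -/
lemma compress_diag {ρ : Matrix B B ℂ} (hρ : ρ.PosSemidef) (S : C → C → Matrix B B ℂ)
    (hS : ∀ k l, (S k l)ᴴ = S l k) (hSS : ∑ k, ∑ l, S k l * S l k = ρ)
    (hX : ∀ k l k' l', (S k l * cfc isq ρ * (S k' l' * cfc isq ρ) -
      S k' l' * cfc isq ρ * (S k l * cfc isq ρ)) * ρ = 0) :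
    ∃ (V : Matrix B B ℂ) (lam : B → ℝ) (m : B → Matrix C C ℂ), V * Vᴴ = 1 ∧ Vᴴ * V = 1 ∧
      (∀ b, 0 ≤ lam b) ∧ (ρ = V * diagonal (fun b => (lam b : ℂ)) * Vᴴ) ∧
      (∀ k l, S k l = V * diagonal (fun b => ((√(lam b) : ℝ) : ℂ) * m b k l) * Vᴴ) ∧
      (∀ b, (m b).IsHermitian) ∧ (∀ b, lam b ≠ 0 → (m b * m b).trace = 1) ∧
      ∀ k l, S k l * cfc isq ρ = V * diagonal (fun b => m b k l) * Vᴴ * cfc sp ρ := by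
  obtain ⟨M, hM, hQM, hMc, hfix⟩ := compress hρ S hS hSS hX
  -- the compressed blocks commute with the square root of the marginal
  have hcomm : ∀ k l, M k l * cfc Real.sqrt ρ = cfc Real.sqrt ρ * M k l := by
    obtain ⟨V, d, hV, hV', hd⟩ := simDiag (fun p : C × C => M p.1 p.2)
      (fun i j => hMc _ _ _ _) (fun i j => by rw [hM]; exact hMc _ _ _ _)
    let m : B → Matrix C C ℂ := fun b => Matrix.of fun k l => d (k, l) b
    have hMm : ∀ k l, M k l = V * diagonal (fun b => m b k l) * Vᴴ := fun k l => hd (k, l)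
    have hm : ∀ b, (m b).IsHermitian := by
      intro b
      ext k l
      have h1 := hM l k
      rw [hMm, hMm, conjTranspose_mul, conjTranspose_mul, conjTranspose_conjTranspose,
        ← Matrix.mul_assoc, diagonal_conjTranspose] at h1
      have h2 := congrFun (diagonal_injective (conj_inj hV' h1)) b
      simpa using h2
    let w := Vᴴ * cfc Real.sqrt ρ * V
    have hw : w.PosSemidef := by
      have : cfc Real.sqrt ρ = (cfc qrt ρ)ᴴ * cfc qrt ρ := by
        rw [cfc_conjTranspose, qrt_mul_qrt]
      have h2 : (cfc Real.sqrt ρ).PosSemidef := by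
        rw [this]
        exact posSemidef_conjTranspose_mul_self _
      exact h2.conjTranspose_mul_mul_same V
    have hVw : V * w * Vᴴ = cfc Real.sqrt ρ := conj_cancel hV _
    have hwfix : ∑ k, ∑ l, diagonal (fun b => m b k l) * w * diagonal (fun b => m b l k) = w := by
      apply conj_inj hV'
      rw [hVw, ← hfix, Finset.mul_sum, Finset.sum_mul]
      refine Finset.sum_congr rfl fun k _ => ?_
      rw [Finset.mul_sum, Finset.sum_mul]
      refine Finset.sum_congr rfl fun l _ => ?_
      rw [hMm k l, hMm l k, ← hVw, conj_mul_conj hV', conj_mul_conj hV']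
    intro k l
    rw [hMm, ← hVw, conj_mul_conj hV', conj_mul_conj hV']
    congr 2
    ext b b'
    rw [diagonal_mul, mul_diagonal]
    by_cases h : w b b' = 0
    · simp [h]
    · rw [fixed_point hm hw hwfix h, mul_comm]
  have hcq : ∀ k l, M k l * cfc qrt ρ = cfc qrt ρ * M k l := fun k l =>
    commute_cfc_of_commute hρ (fun x y _ _ h => by rw [qrt, qrt, h]) (hcomm k l)
  obtain ⟨V, d, hV, hV', hd⟩ := simDiag
    (fun o : Option (C × C) => Option.elim o (cfc qrt ρ) (fun p => M p.1 p.2))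
    (by
      rintro (_ | i) (_ | j)
      · rfl
      · exact (hcq _ _).symm
      · exact hcq _ _
      · exact hMc _ _ _ _)
    (by
      rintro (_ | i) (_ | j)
      · simp only [Option.elim_none, cfc_conjTranspose]
      · simp only [Option.elim_none, Option.elim_some, hM]
        exact (hcq _ _).symm
      · simp only [Option.elim_none, Option.elim_some, cfc_conjTranspose]
        exact hcq _ _
      · simp only [Option.elim_some, hM]
        exact hMc _ _ _ _)
  let m : B → Matrix C C ℂ := fun b => Matrix.of fun k l => d (some (k, l)) b
  have hMm : ∀ k l, M k l = V * diagonal (fun b => m b k l) * Vᴴ := fun k l => hd (some (k, l))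
  have hm : ∀ b, (m b).IsHermitian := by
    intro b
    ext k l
    have h1 := hM l k
    rw [hMm, hMm, conjTranspose_mul, conjTranspose_mul, conjTranspose_conjTranspose,
      ← Matrix.mul_assoc, diagonal_conjTranspose] at h1
    have h2 := congrFun (diagonal_injective (conj_inj hV' h1)) b
    simpa using h2
  have hQ0 : cfc qrt ρ = V * diagonal (d none) * Vᴴ := hd none
  have hreal : ∀ b, d none b = (((d none b).re : ℝ) : ℂ) := by
    intro b
    have h1 := cfc_conjTranspose qrt ρ
    rw [hQ0, conjTranspose_mul, conjTranspose_mul, conjTranspose_conjTranspose,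
      ← Matrix.mul_assoc, diagonal_conjTranspose] at h1
    have h2 := congrFun (diagonal_injective (conj_inj hV' h1)) b
    exact (Complex.conj_eq_iff_re.1 h2).symm
  let c : B → ℝ := fun b => (d none b).re
  have hQ : cfc qrt ρ = V * diagonal (fun b => (c b : ℂ)) * Vᴴ := by
    rw [hQ0]
    congr 3
    funext b
    exact hreal b
  have hρQ : ρ = cfc qrt ρ * cfc qrt ρ * (cfc qrt ρ * cfc qrt ρ) := by
    rw [qrt_mul_qrt, sqrt_mul_sqrt_cfc hρ]
  have hρV : ρ = V * diagonal (fun b => (((c b * c b) ^ 2 : ℝ) : ℂ)) * Vᴴ := by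
    conv_lhs => rw [hρQ, hQ, conj_diag_mul hV', conj_diag_mul hV']
    congr 3
    funext b
    push_cast
    ring
  have hSV : ∀ k l, S k l = V * diagonal (fun b => ((√((c b * c b) ^ 2) : ℝ) : ℂ) * m b k l) * Vᴴ := by
    intro k l
    rw [← hQM, hQ, hMm, conj_diag_mul hV', conj_diag_mul hV']
    congr 3
    funext b
    rw [Real.sqrt_sq (mul_self_nonneg _)]
    push_cast
    ring
  refine ⟨V, fun b => (c b * c b) ^ 2, m, hV, hV', fun b => sq_nonneg _, hρV, hSV, hm, ?_, ?_⟩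
  · intro b hb
    have h1 := hSS
    have h2 : ∑ k, ∑ l, S k l * S l k = V * (∑ k, ∑ l, diagonal
        (fun b => (((c b * c b) ^ 2 : ℝ) : ℂ) * (m b k l * m b l k))) * Vᴴ := by
      rw [Finset.mul_sum, Finset.sum_mul]
      refine Finset.sum_congr rfl fun k _ => ?_
      rw [Finset.mul_sum, Finset.sum_mul]
      refine Finset.sum_congr rfl fun l _ => ?_
      rw [hSV, hSV, conj_diag_mul hV']
      congr 3
      funext b
      rw [Real.sqrt_sq (mul_self_nonneg _)]
      push_cast
      ring
    rw [h2] at h1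
    have h3 := h1.trans hρV
    have h4 := congrFun (congrFun (conj_inj hV' h3) b) b
    simp only [Matrix.sum_apply, diagonal_apply_eq, ← Finset.mul_sum] at h4
    have hb' : (((c b * c b) ^ 2 : ℝ) : ℂ) ≠ 0 := by exact_mod_cast hb
    simp only [Matrix.trace, diag_apply, Matrix.mul_apply]
    exact mul_left_cancel₀ hb' (by rw [h4, mul_one])
  · intro k l
    rw [← hMm, ← hQM, ← hcq, Matrix.mul_assoc (M k l), Matrix.mul_assoc (M k l), ← qrt_mul_iqrt hρ,
      Matrix.mul_assoc, qrt_mul_isq hρ]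

/-- **Double Markov condition.** If the blocks `y k l * G` of the square root of a state on `NC`
come both from the subsystem `B` and from elements `y` commuting with `B`, then the marginal on
`BC` is a direct sum over an orthonormal basis of `B`. -/
theorem double_markov (β : Matrix B B ℂ →⋆ₐ[ℂ] Matrix N N ℂ) {G : Matrix N N ℂ} (hG : Gᴴ = G)
    {ρ : Matrix B B ℂ} (hρ : ρ.PosSemidef) (hτ : ∀ x, (β x * (G * G)).trace = (x * ρ).trace)
    (S : C → C → Matrix B B ℂ) (hS : ∀ k l, (S k l)ᴴ = S l k)
    (hSS : ∑ k, ∑ l, S k l * S l k = ρ) (y : C → C → Matrix N N ℂ)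
    (hy : ∀ k l x, y k l * β x = β x * y k l)
    (hr : ∀ k l, β (S k l * cfc isq ρ) * G = y k l * G)
    (hrr : ∀ k l, (y k l * G)ᴴ = y l k * G) :
    ∃ (V : Matrix B B ℂ) (lam : B → ℝ) (m : B → Matrix C C ℂ), V * Vᴴ = 1 ∧ Vᴴ * V = 1 ∧
      (∀ b, 0 ≤ lam b) ∧ (ρ = V * diagonal (fun b => (lam b : ℂ)) * Vᴴ) ∧
      (∀ k l, S k l = V * diagonal (fun b => ((√(lam b) : ℝ) : ℂ) * m b k l) * Vᴴ) ∧
      (∀ b, (m b).IsHermitian) ∧ (∀ b, lam b ≠ 0 → (m b * m b).trace = 1) ∧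
      ∀ k l, β (V * diagonal (fun b => m b k l) * Vᴴ) * G = y k l * G := by
  have hadj : ∀ k l, y k l * G = G * (β (S l k * cfc isq ρ))ᴴ := by
    intro k l
    rw [← hrr l k, ← hr l k, conjTranspose_mul, hG]
  obtain ⟨V, lam, m, hV, hV', hlam, hρV, hSV, hm, htr, hSI⟩ := compress_diag hρ S hS hSS (by
    intro k l k' l'
    rw [← map_mul_eq_zero β hG hρ hτ, map_sub, Matrix.sub_mul, sub_eq_zero]
    calc β (S k l * cfc isq ρ * (S k' l' * cfc isq ρ)) * G
        = β (S k l * cfc isq ρ) * (β (S k' l' * cfc isq ρ) * G) := by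
          rw [map_mul, Matrix.mul_assoc]
      _ = y k' l' * (β (S k l * cfc isq ρ) * G) := by
          rw [hr, ← Matrix.mul_assoc, ← hy, Matrix.mul_assoc]
      _ = y k' l' * G * (β (S l k * cfc isq ρ))ᴴ := by rw [hr, hadj, Matrix.mul_assoc]
      _ = β (S k' l' * cfc isq ρ) * (G * (β (S l k * cfc isq ρ))ᴴ) := by
          rw [← hr, Matrix.mul_assoc]
      _ = β (S k' l' * cfc isq ρ * (S k l * cfc isq ρ)) * G := by
          rw [← hadj, ← hr, map_mul β (S k' l' * cfc isq ρ), Matrix.mul_assoc])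
  refine ⟨V, lam, m, hV, hV', hlam, hρV, hSV, hm, htr, fun k l => ?_⟩
  have hPG : β (cfc sp ρ) * G = G := by
    have h0 : β (1 - cfc sp ρ) * G = 0 := by
      rw [map_mul_eq_zero β hG hρ hτ, Matrix.sub_mul, Matrix.one_mul, sp_mul_self hρ, sub_self]
    rw [map_sub, map_one, Matrix.sub_mul, Matrix.one_mul, sub_eq_zero] at h0
    exact h0.symm
  rw [← hr, hSI, map_mul β _ (cfc sp ρ), Matrix.mul_assoc _ (β (cfc sp ρ)), hPG]

end DoubleMarkov2

/-! ### Klein's inequality and the entropy bound -/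

section EntropyBound

set_option linter.unusedSectionVars false

variable {n C D J : Type*} [Fintype n] [DecidableEq n] [Fintype C] [DecidableEq C]
  [Fintype D] [DecidableEq D] [Fintype J] [DecidableEq J]

lemma conj_diag_apply (X : Matrix n n ℂ) (r : n → ℝ) (k : n) :
    (X * diagonal (fun i => (r i : ℂ)) * Xᴴ) k k = ((∑ i, Complex.normSq (X k i) * r i : ℝ) : ℂ) := by
  rw [Matrix.mul_apply]
  push_cast
  refine Finset.sum_congr rfl fun i _ => ?_
  rw [mul_diagonal, conjTranspose_apply, ← Complex.mul_conj]
  simp only [RCLike.star_def]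
  ring

lemma unitary_row_sum {X : Matrix n n ℂ} (hX : X * Xᴴ = 1) (k : n) :
    ∑ i, Complex.normSq (X k i) = 1 := by
  have h := conj_diag_apply X (fun _ => (1 : ℝ)) k
  simp only [Complex.ofReal_one, mul_one] at h
  rw [show diagonal (fun _ : n => (1 : ℂ)) = 1 from diagonal_one, Matrix.mul_one, hX,
    one_apply_eq] at h
  exact_mod_cast h.symm

lemma unitary_col_sum {X : Matrix n n ℂ} (hX : Xᴴ * X = 1) (i : n) :
    ∑ k, Complex.normSq (X k i) = 1 := by
  have h := unitary_row_sum (X := Xᴴ) (by rwa [conjTranspose_conjTranspose]) i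
  simpa [conjTranspose_apply, Complex.normSq_conj] using h

/-- The scalar form of Klein's inequality, including the degenerate case `r = s = 0`. -/
lemma sub_le_mul_log_sub {r s : ℝ} (hr : 0 ≤ r) (hs : 0 ≤ s) (h : s = 0 → r = 0) :
    r - s ≤ r * (Real.log r - Real.log s) := by
  rcases hs.eq_or_lt with h0 | h0
  · rw [h h0.symm, ← h0]; simp
  rcases hr.eq_or_lt with h1 | h1
  · rw [← h1]; simpa using hs
  have h2 := Real.log_le_sub_one_of_pos (div_pos h0 h1)
  rw [Real.log_div h0.ne' h1.ne'] at h2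
  have h3 := mul_le_mul_of_nonneg_left h2 hr
  have h4 : r * (s / r - 1) = s - r := by field_simp
  linarith

/-- **Klein's inequality** against an operator diagonal in the orthonormal basis formed by the
columns of `W`, with eigenvalues `s`. -/
lemma klein_diag {σ : Matrix n n ℂ} (hσ : σ.PosSemidef) {W : Matrix n n ℂ} (hW : W * Wᴴ = 1)
    (hW' : Wᴴ * W = 1) {s : n → ℝ} (hs : ∀ k, 0 ≤ s k) (hsum : ((∑ k, s k : ℝ) : ℂ) = σ.trace)
    (h0 : ∀ k, s k = 0 → (Wᴴ * σ * W) k k = 0) :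
    vNEntropy σ * Real.log 2 ≤ -∑ k, ((Wᴴ * σ * W) k k).re * Real.log (s k) := by
  obtain ⟨U, r, hU, hU', hr, hf⟩ := exists_spectral hσ
  have idσ : σ = U * diagonal (fun i => ((r i : ℝ) : ℂ)) * Uᴴ := by
    rw [← hf fun x => x, cfc_self hσ fun _ _ => rfl]
  rw [vNEntropy_diag r hU' idσ]
  obtain ⟨X, hXd⟩ : ∃ X, X = Wᴴ * U := ⟨_, rfl⟩
  have hX : X * Xᴴ = 1 := by
    rw [hXd, conjTranspose_mul, conjTranspose_conjTranspose, Matrix.mul_assoc, ← Matrix.mul_assoc U,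
      hU, Matrix.one_mul, hW']
  have hX' : Xᴴ * X = 1 := by
    rw [hXd, conjTranspose_mul, conjTranspose_conjTranspose, Matrix.mul_assoc, ← Matrix.mul_assoc W,
      hW, Matrix.one_mul, hU']
  have hXσ : Wᴴ * σ * W = X * diagonal (fun i => ((r i : ℝ) : ℂ)) * Xᴴ := by
    rw [hXd, conjTranspose_mul, conjTranspose_conjTranspose, idσ]
    simp only [Matrix.mul_assoc]
  have hp : ∀ k, (Wᴴ * σ * W) k k = ((∑ i, Complex.normSq (X k i) * r i : ℝ) : ℂ) := by
    intro k
    rw [hXσ, conj_diag_apply]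
  have htr : ∑ k, s k = ∑ i, r i := by
    have : σ.trace = ((∑ i, r i : ℝ) : ℂ) := by
      rw [idσ, trace_mul_comm, ← Matrix.mul_assoc, hU', Matrix.one_mul, trace_diagonal]
      push_cast
      rfl
    rw [this] at hsum
    exact_mod_cast hsum
  have hterm : ∀ k i, Complex.normSq (X k i) * (r i - s k) ≤
      Complex.normSq (X k i) * (r i * (Real.log (r i) - Real.log (s k))) := by
    intro k i
    by_cases hz : Complex.normSq (X k i) = 0
    · rw [hz, zero_mul, zero_mul]
    · refine mul_le_mul_of_nonneg_left (sub_le_mul_log_sub (hr i) (hs k) fun h => ?_)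
        (Complex.normSq_nonneg _)
      have h1 := h0 k h
      rw [hp] at h1
      have h2 : ∑ i, Complex.normSq (X k i) * r i = 0 := by exact_mod_cast h1
      have h3 := (Finset.sum_eq_zero_iff_of_nonneg
        (fun i _ => mul_nonneg (Complex.normSq_nonneg _) (hr i))).1 h2 i (Finset.mem_univ _)
      exact (mul_eq_zero.1 h3).resolve_left hz
  have hall := Finset.sum_le_sum fun k (_ : k ∈ Finset.univ) =>
    Finset.sum_le_sum fun i (_ : i ∈ Finset.univ) => hterm k i
  have hl : ∑ k, ∑ i, Complex.normSq (X k i) * (r i - s k) = 0 := by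
    simp only [mul_sub, Finset.sum_sub_distrib]
    rw [Finset.sum_comm]
    simp only [← Finset.sum_mul, unitary_row_sum hX, unitary_col_sum hX', one_mul]
    rw [htr, sub_self]
  have hrr : ∑ k, ∑ i, Complex.normSq (X k i) * (r i * (Real.log (r i) - Real.log (s k))) =
      ∑ i, r i * Real.log (r i) - ∑ k, ((Wᴴ * σ * W) k k).re * Real.log (s k) := by
    simp only [mul_sub, Finset.sum_sub_distrib]
    congr 1
    · rw [Finset.sum_comm]
      simp only [← Finset.sum_mul, unitary_col_sum hX', one_mul]
    · refine Finset.sum_congr rfl fun k _ => ?_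
      rw [hp, Complex.ofReal_re, Finset.sum_mul]
      refine Finset.sum_congr rfl fun i _ => ?_
      ring
  rw [hl, hrr] at hall
  linarith

/-- Unitary invariance of the entropy. -/
lemma vNEntropy_conj {M : Matrix n n ℂ} (hM : M.PosSemidef) {U : Matrix n n ℂ} (hU : U * Uᴴ = 1) :
    vNEntropy (Uᴴ * M * U) = vNEntropy M := by
  obtain ⟨V, r, hV, hV', hr, hf⟩ := exists_spectral hM
  have idM : M = V * diagonal (fun i => ((r i : ℝ) : ℂ)) * Vᴴ := by
    rw [← hf fun x => x, cfc_self hM fun _ _ => rfl]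
  have h1 := vNEntropy_diag r hV' idM
  have h2 := vNEntropy_diag (M := Uᴴ * M * U) (U := Uᴴ * V) r
    (by rw [conjTranspose_mul, conjTranspose_conjTranspose, Matrix.mul_assoc, ← Matrix.mul_assoc U,
      hU, Matrix.one_mul, hV'])
    (by
      rw [conjTranspose_mul, conjTranspose_conjTranspose, idM]
      simp only [Matrix.mul_assoc])
  have h3 : Real.log 2 ≠ 0 := (Real.log_pos one_lt_two).ne'
  exact mul_right_cancel₀ h3 (h2.trans h1.symm)

lemma emb_fst_apply (y : Matrix C C ℂ) (a a' : C) (b b' : D) :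
    emb (Equiv.refl (C × D)) y (a, b) (a', b') = if b = b' then y a a' else 0 :=
  emb_apply (Equiv.refl (C × D)) y _ _

lemma emb_snd_apply (x : Matrix D D ℂ) (a a' : C) (b b' : D) :
    emb (Equiv.prodComm C D) x (a, b) (a', b') = if a = a' then x b b' else 0 :=
  emb_apply (Equiv.prodComm C D) x _ _

/-- Operators on the two tensor factors of `C × D` commute. -/
lemma emb_refl_comm (y : Matrix C C ℂ) (x : Matrix D D ℂ) :
    emb (Equiv.refl (C × D)) y * emb (Equiv.prodComm C D) x =
      emb (Equiv.prodComm C D) x * emb (Equiv.refl (C × D)) y := by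
  ext ⟨a, b⟩ ⟨a', b'⟩
  simp [Matrix.mul_apply, Fintype.sum_prod_type, emb_fst_apply, emb_snd_apply, mul_comm]

/-- The entropy bound when all the `D`-marginals of the `E j` are diagonal. -/
lemma entropy_bound_diag [Nonempty J] {E : J → Matrix (C × D) (C × D) ℂ} (hE : ∀ j, (E j).PosSemidef)
    {q : J → D → ℝ} (hq : ∀ j, ptr (Equiv.prodComm C D) (E j) = diagonal (fun d => (q j d : ℂ)))
    (hqq : ∀ i j, i ≠ j → ∀ d, q i d * q j d = 0)
    {p : J → ℝ} {ν : J → Matrix C C ℂ} (hν : ∀ j, (ν j).PosSemidef)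
    (hpν : ∀ j, ptr (Equiv.refl (C × D)) (E j) = (p j : ℂ) • ν j)
    (hν1 : ∀ j, p j ≠ 0 → (ν j).trace = 1) :
    vNEntropy (∑ j, E j) * Real.log 2 ≤
      vNEntropy (∑ j, ptr (Equiv.prodComm C D) (E j)) * Real.log 2 +
        ∑ j, p j * (vNEntropy (ν j) * Real.log 2) := by
  -- the unique label carrying weight at `d`
  have hlab : ∀ d, ∃ j, ∀ i, i ≠ j → q i d = 0 := by
    intro d
    by_cases h : ∃ j, q j d ≠ 0
    · obtain ⟨j, hj⟩ := h
      exact ⟨j, fun i hi => (mul_eq_zero.1 (hqq i j hi d)).resolve_right hj⟩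
    · push Not at h
      exact ⟨Classical.arbitrary J, fun i _ => h i⟩
  choose lab hlab using hlab
  choose F r hF hF' hr hf using fun j => exists_spectral (hν j)
  have idν : ∀ j, ν j = F j * diagonal (fun i => ((r j i : ℝ) : ℂ)) * (F j)ᴴ := by
    intro j
    rw [← hf j fun x => x, cfc_self (hν j) fun _ _ => rfl]
  -- the diagonal blocks of `E j`
  obtain ⟨ξ, hξd⟩ : ∃ ξ : J → D → Matrix C C ℂ, ξ = fun j d =>
    slice (Equiv.refl (C × D)) d d (E j) := ⟨_, rfl⟩
  have hξ : ∀ j d, (ξ j d).PosSemidef := by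
    intro j d
    rw [hξd]
    exact (hE j).submatrix fun i => (i, d)
  have hξtr : ∀ j d, (ξ j d).trace = (q j d : ℂ) := by
    intro j d
    have h1 := congrFun (congrFun (hq j) d) d
    rw [diagonal_apply_eq] at h1
    rw [← h1, hξd]
    rfl
  have hq0 : ∀ j d, 0 ≤ q j d := by
    intro j d
    have h1 := (hξ j d).trace_nonneg
    rw [hξtr] at h1
    exact_mod_cast h1
  have hξ0 : ∀ j d, j ≠ lab d → ξ j d = 0 := by
    intro j d h
    rw [← (hξ j d).trace_eq_zero_iff, hξtr, hlab d j h, Complex.ofReal_zero]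
  have hξsum : ∀ j, ∑ d, ξ j d = (p j : ℂ) • ν j := by
    intro j
    rw [← hpν, ptr_eq_sum, hξd]
  -- the weight of `E j` on the eigenvector `c` of `ν j` at `d`
  obtain ⟨g, hgd⟩ : ∃ g : J → D → C → ℝ, g = fun j d c => (((F j)ᴴ * ξ j d * F j) c c).re :=
    ⟨_, rfl⟩
  have hgps : ∀ j d, ((F j)ᴴ * ξ j d * F j).PosSemidef := fun j d =>
    (hξ j d).conjTranspose_mul_mul_same _
  have hg : ∀ j d c, ((F j)ᴴ * ξ j d * F j) c c = (g j d c : ℂ) := by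
    intro j d c
    have h1 := (hgps j d).diag_nonneg (i := c)
    rw [hgd]
    exact Complex.ext rfl (by simpa using (Complex.le_def.1 h1).2.symm)
  have hg0 : ∀ j d c, 0 ≤ g j d c := by
    intro j d c
    have h1 := (hgps j d).diag_nonneg (i := c)
    rw [hg] at h1
    exact_mod_cast h1
  have hgc : ∀ j d, ∑ c, g j d c = q j d := by
    intro j d
    have h1 : ((F j)ᴴ * ξ j d * F j).trace = (q j d : ℂ) := by
      rw [trace_mul_comm, ← Matrix.mul_assoc, hF, Matrix.one_mul, hξtr]
    simp only [Matrix.trace, diag_apply, hg] at h1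
    exact_mod_cast h1
  have hgD : ∀ j c, ∑ d, g j d c = p j * r j c := by
    intro j c
    have h1 : ∑ d, (F j)ᴴ * ξ j d * F j = (p j : ℂ) • diagonal (fun i => ((r j i : ℝ) : ℂ)) := by
      rw [← Finset.sum_mul, ← Finset.mul_sum, hξsum, idν j, Matrix.mul_smul, Matrix.smul_mul]
      congr 1
      calc _ = ((F j)ᴴ * F j) * diagonal (fun i => ((r j i : ℝ) : ℂ)) * ((F j)ᴴ * F j) := by
            simp only [Matrix.mul_assoc]
        _ = _ := by rw [hF', Matrix.one_mul, Matrix.mul_one]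
    have h2 := congrFun (congrFun h1 c) c
    rw [Matrix.sum_apply] at h2
    simp only [hg, Matrix.smul_apply, diagonal_apply_eq, smul_eq_mul] at h2
    exact_mod_cast h2
  have hgz : ∀ j d c, j ≠ lab d → g j d c = 0 := by
    intro j d c h
    rw [hgd]
    simp [hξ0 j d h]
  obtain ⟨lam, hlamd⟩ : ∃ lam : D → ℝ, lam = fun d => ∑ j, q j d := ⟨_, rfl⟩
  have hlam : ∀ d, lam d = q (lab d) d := by
    intro d
    rw [hlamd]
    exact Finset.sum_eq_single _ (fun i _ hi => hlab d i hi) (by simp)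
  have hlam0 : ∀ d, 0 ≤ lam d := fun d => by rw [hlam]; exact hq0 _ _
  -- the product basis, with the eigenbasis of `ν (lab d)` attached to `d`
  obtain ⟨W, hWd⟩ : ∃ W : Matrix (C × D) (C × D) ℂ, W = Matrix.of fun x y =>
    if x.2 = y.2 then F (lab y.2) x.1 y.1 else 0 := ⟨_, rfl⟩
  have hW' : Wᴴ * W = 1 := by
    ext ⟨c, d⟩ ⟨c', d'⟩
    rw [Matrix.mul_apply, Fintype.sum_prod_type_right, Finset.sum_eq_single d]
    · simp only [conjTranspose_apply, hWd, of_apply, if_true]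
      by_cases h : d = d'
      · subst h
        have h1 := congrFun (congrFun (hF' (lab d)) c) c'
        rw [Matrix.mul_apply] at h1
        simpa [Matrix.one_apply, Prod.ext_iff] using h1
      · simp [h]
    · intro b _ hb
      simp [hWd, hb]
    · simp
  have hW : W * Wᴴ = 1 := mul_eq_one_comm.1 hW'
  have hWE : ∀ c d, (Wᴴ * (∑ j, E j) * W) (c, d) (c, d) = (g (lab d) d c : ℂ) := by
    intro c d
    have h1 : ∀ X : Matrix (C × D) (C × D) ℂ, (Wᴴ * X * W) (c, d) (c, d) =
        ((F (lab d))ᴴ * slice (Equiv.refl (C × D)) d d X * F (lab d)) c c := by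
      intro X
      simp only [Matrix.mul_apply]
      rw [Fintype.sum_prod_type_right, Finset.sum_eq_single d]
      · refine Finset.sum_congr rfl fun x _ => ?_
        rw [Fintype.sum_prod_type_right, Finset.sum_eq_single d]
        · simp [hWd, slice]
        · intro b _ hb
          simp [hWd, hb]
        · simp
      · intro b _ hb
        simp [hWd, hb]
      · simp
    rw [Finset.mul_sum, Finset.sum_mul, Matrix.sum_apply, Finset.sum_eq_single (lab d)]
    · rw [h1, ← hg, hξd]
    · intro j _ hj
      rw [h1]
      have h2 := hξ0 j d hj
      rw [hξd] at h2
      simp only at h2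
      rw [h2]
      simp
    · simp
  have hgr : ∀ d c, r (lab d) c = 0 → g (lab d) d c = 0 := by
    intro d c h
    have h1 := hgD (lab d) c
    rw [h, mul_zero] at h1
    exact (Finset.sum_eq_zero_iff_of_nonneg (fun d _ => hg0 _ d c)).1 h1 d (Finset.mem_univ _)
  have hgl : ∀ d c, lam d = 0 → g (lab d) d c = 0 := by
    intro d c h
    have h1 := hgc (lab d) d
    rw [← hlam, h] at h1
    exact (Finset.sum_eq_zero_iff_of_nonneg (fun c _ => hg0 _ d c)).1 h1 c (Finset.mem_univ _)
  have hσ : (∑ j, E j).PosSemidef := posSemidef_sum _ fun j _ => hE j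
  have hrsum : ∀ d, lam d ≠ 0 → ∑ c, r (lab d) c = 1 := by
    intro d hd
    have hp : p (lab d) ≠ 0 := by
      intro hp
      apply hd
      rw [hlam, ← hgc]
      refine Finset.sum_eq_zero fun c _ => ?_
      have h1 := hgD (lab d) c
      rw [hp, zero_mul] at h1
      exact (Finset.sum_eq_zero_iff_of_nonneg (fun d _ => hg0 _ d c)).1 h1 d (Finset.mem_univ _)
    have h1 := hν1 _ hp
    rw [idν, trace_mul_comm, ← Matrix.mul_assoc, hF', Matrix.one_mul, trace_diagonal] at h1
    exact_mod_cast h1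
  have hk := klein_diag hσ hW hW' (s := fun x : C × D => lam x.2 * r (lab x.2) x.1)
    (fun x => mul_nonneg (hlam0 _) (hr _ _))
    (by
      have h1 : ∑ x : C × D, lam x.2 * r (lab x.2) x.1 = ∑ d, lam d := by
        rw [Fintype.sum_prod_type_right]
        refine Finset.sum_congr rfl fun d _ => ?_
        change ∑ c, lam d * r (lab d) c = lam d
        rw [← Finset.mul_sum]
        by_cases hd : lam d = 0
        · rw [hd, zero_mul]
        · rw [hrsum d hd, mul_one]
      rw [h1, trace_sum, hlamd, Finset.sum_comm]
      push_cast
      refine Finset.sum_congr rfl fun j _ => ?_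
      rw [← trace_ptr (Equiv.prodComm C D), hq, trace_diagonal])
    (by
      rintro ⟨c, d⟩ h
      rw [hWE]
      rcases mul_eq_zero.1 h with h | h
      · rw [hgl d c h, Complex.ofReal_zero]
      · rw [hgr d c h, Complex.ofReal_zero])
  have hD : vNEntropy (∑ j, ptr (Equiv.prodComm C D) (E j)) * Real.log 2 =
      -∑ d, lam d * Real.log (lam d) := by
    refine vNEntropy_diag (U := 1) lam (by simp) ?_
    rw [Matrix.one_mul, conjTranspose_one, Matrix.mul_one]
    simp only [hq, hlamd]
    ext d d'
    rw [Matrix.sum_apply]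
    by_cases h : d = d'
    · subst h
      simp
    · simp [h]
  have hC : ∀ j, vNEntropy (ν j) * Real.log 2 = -∑ c, r j c * Real.log (r j c) := fun j =>
    vNEntropy_diag (r j) (hF' j) (idν j)
  refine hk.trans (le_of_eq ?_)
  have hsplit : ∀ d c, g (lab d) d c * Real.log (lam d * r (lab d) c) =
      g (lab d) d c * Real.log (lam d) + ∑ j, g j d c * Real.log (r j c) := by
    intro d c
    rw [Finset.sum_eq_single (lab d) (fun j _ hj => by rw [hgz j d c hj, zero_mul]) (by simp)]
    by_cases h1 : lam d = 0
    · simp [hgl d c h1]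
    by_cases h2 : r (lab d) c = 0
    · simp [hgr d c h2]
    rw [Real.log_mul h1 h2, mul_add]
  rw [hD, Fintype.sum_prod_type_right]
  simp only [hWE, Complex.ofReal_re, hsplit, hC, Finset.sum_add_distrib, ← Finset.sum_mul, hgc,
    ← hlam]
  have h1 : ∑ d, ∑ c, ∑ j, g j d c * Real.log (r j c) =
      ∑ j, p j * ∑ c, r j c * Real.log (r j c) := by
    calc _ = ∑ j, ∑ d, ∑ c, g j d c * Real.log (r j c) := by
          rw [Finset.sum_comm]
          simp only [Finset.sum_comm (s := (Finset.univ : Finset D))]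
          rw [Finset.sum_comm]
      _ = _ := by
          refine Finset.sum_congr rfl fun j _ => ?_
          rw [Finset.sum_comm, Finset.mul_sum]
          refine Finset.sum_congr rfl fun c _ => ?_
          rw [← Finset.sum_mul, hgD, mul_assoc]
  rw [h1, neg_add]
  simp only [mul_neg, Finset.sum_neg_distrib]

/-- If the pieces `E j` of a state on `CD` have mutually orthogonal marginals on `D`, and
`C`-marginals proportional to states `ν j`, then the entropy of `CD` is at most that of `D` plus
the mean entropy of the `ν j`. -/
theorem entropy_bound [Nonempty J] {E : J → Matrix (C × D) (C × D) ℂ} (hE : ∀ j, (E j).PosSemidef)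
    (hEE : ∀ i j, i ≠ j → ptr (Equiv.prodComm C D) (E i) * ptr (Equiv.prodComm C D) (E j) = 0)
    {p : J → ℝ} {ν : J → Matrix C C ℂ} (hν : ∀ j, (ν j).PosSemidef)
    (hpν : ∀ j, ptr (Equiv.refl (C × D)) (E j) = (p j : ℂ) • ν j)
    (hν1 : ∀ j, p j ≠ 0 → (ν j).trace = 1) :
    vNEntropy (∑ j, E j) * Real.log 2 ≤
      vNEntropy (∑ j, ptr (Equiv.prodComm C D) (E j)) * Real.log 2 +
        ∑ j, p j * (vNEntropy (ν j) * Real.log 2) := by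
  obtain ⟨δ, hδd⟩ : ∃ δ : J → Matrix D D ℂ, δ = fun j => ptr (Equiv.prodComm C D) (E j) := ⟨_, rfl⟩
  have hδ : ∀ j, (δ j).PosSemidef := fun j => by rw [hδd]; exact ptr_posSemidef _ (hE j)
  have hδδ : ∀ i j, i ≠ j → δ i * δ j = 0 := fun i j h => by rw [hδd]; exact hEE i j h
  have hcom : ∀ i j, δ i * δ j = δ j * δ i := by
    intro i j
    by_cases h : i = j
    · rw [h]
    · rw [hδδ i j h, hδδ j i (Ne.symm h)]
  obtain ⟨V, q, hV, hV', hVq⟩ := simDiag δ hcom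
    (fun i j => by rw [(hδ j).1.eq]; exact hcom i j)
  have hVδ : ∀ j, Vᴴ * δ j * V = diagonal (q j) := by
    intro j
    rw [hVq]
    exact conj_cancel' hV' _
  have hqr : ∀ j d, q j d = (((q j d).re : ℝ) : ℂ) := by
    intro j d
    have h1 := ((hδ j).conjTranspose_mul_mul_same V).diag_nonneg (i := d)
    rw [hVδ, diagonal_apply_eq] at h1
    exact Complex.ext rfl (by simpa using (Complex.le_def.1 h1).2.symm)
  obtain ⟨X, hXd⟩ : ∃ X, X = emb (Equiv.prodComm C D) V := ⟨_, rfl⟩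
  have hX : X * Xᴴ = 1 := by
    rw [hXd, ← map_conjTranspose, ← map_mul, hV, map_one]
  have hptr : ∀ j, ptr (Equiv.prodComm C D) (Xᴴ * E j * X) = diagonal (q j) := by
    intro j
    rw [hXd, ← map_conjTranspose, ptr_mul_emb, ptr_emb_mul, ← hVδ, hδd]
  have key := entropy_bound_diag (E := fun j => Xᴴ * E j * X) (q := fun j d => (q j d).re) (p := p)
    (ν := ν) (fun j => (hE j).conjTranspose_mul_mul_same X)
    (fun j => by
      rw [hptr]
      congr 1
      funext d
      exact hqr j d)
    (fun i j hij d => by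
      have h1 : diagonal (q i) * diagonal (q j) = 0 := by
        rw [← hVδ, ← hVδ]
        calc _ = Vᴴ * δ i * (V * Vᴴ) * δ j * V := by simp only [Matrix.mul_assoc]
          _ = 0 := by
            rw [hV, Matrix.mul_one, Matrix.mul_assoc Vᴴ, hδδ i j hij, Matrix.mul_zero,
              Matrix.zero_mul]
      rw [diagonal_mul_diagonal] at h1
      have h2 := congrFun (congrFun h1 d) d
      rw [diagonal_apply_eq, hqr i d, hqr j d, Matrix.zero_apply] at h2
      exact_mod_cast h2)
    hν
    (fun j => by
      rw [← hpν]
      -- a unitary on `D` does not change the marginal on `C`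
      ext c c'
      have h1 : ∀ (y : Matrix C C ℂ), (y * ptr (Equiv.refl (C × D)) (Xᴴ * E j * X)).trace =
          (y * ptr (Equiv.refl (C × D)) (E j)).trace := by
        intro y
        have hcomm : emb (Equiv.refl (C × D)) y * Xᴴ = Xᴴ * emb (Equiv.refl (C × D)) y := by
          rw [hXd, ← map_conjTranspose, emb_refl_comm]
        rw [← trace_emb_mul, ← trace_emb_mul, ← Matrix.mul_assoc, ← Matrix.mul_assoc, hcomm,
          Matrix.mul_assoc Xᴴ, trace_mul_cycle, hX, Matrix.one_mul]
      have h2 := h1 (Matrix.single c' c 1)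
      simpa [Matrix.trace_single_mul] using h2)
    hν1
  have e1 : ∑ j, Xᴴ * E j * X = Xᴴ * (∑ j, E j) * X := by
    rw [Finset.mul_sum, Finset.sum_mul]
  have e2 : ∑ j, ptr (Equiv.prodComm C D) (Xᴴ * E j * X) =
      Vᴴ * (∑ j, ptr (Equiv.prodComm C D) (E j)) * V := by
    rw [Finset.mul_sum, Finset.sum_mul]
    refine Finset.sum_congr rfl fun j _ => ?_
    rw [hptr, ← hVδ, hδd]
  rw [e1, e2, vNEntropy_conj (posSemidef_sum _ fun j _ => hE j) hX,
    vNEntropy_conj (posSemidef_sum _ fun j _ => ptr_posSemidef _ (hE j)) hV] at key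
  exact key

end EntropyBound

/-! ### Tripartite systems -/

section Tripartite

set_option linter.unusedSectionVars false

variable {X Y Z : Type*} [Fintype X] [DecidableEq X] [Fintype Y] [DecidableEq Y]
  [Fintype Z] [DecidableEq Z]

/-- The identification of a tripartite index set with the pair of the first two systems and the
third one. -/
def e12 (X Y Z : Type*) : X × Y × Z ≃ (X × Y) × Z := (Equiv.prodAssoc X Y Z).symm

/-- The identification singling out the second system. -/
def e13 (X Y Z : Type*) : X × Y × Z ≃ (X × Z) × Y where
  toFun p := ((p.1, p.2.2), p.2.1)
  invFun q := (q.1.1, q.2, q.1.2)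
  left_inv _ := rfl
  right_inv _ := rfl

/-- The identification singling out the first system. -/
def e23 (X Y Z : Type*) : X × Y × Z ≃ (Y × Z) × X := Equiv.prodComm X (Y × Z)

lemma emb12_apply (x : Matrix (X × Y) (X × Y) ℂ) (a a' : X) (b b' : Y) (c c' : Z) :
    emb (e12 X Y Z) x (a, b, c) (a', b', c') = if c = c' then x (a, b) (a', b') else 0 :=
  emb_apply (e12 X Y Z) x _ _

lemma emb13_apply (x : Matrix (X × Z) (X × Z) ℂ) (a a' : X) (b b' : Y) (c c' : Z) :
    emb (e13 X Y Z) x (a, b, c) (a', b', c') = if b = b' then x (a, c) (a', c') else 0 :=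
  emb_apply (e13 X Y Z) x _ _

lemma emb23_apply (x : Matrix (Y × Z) (Y × Z) ℂ) (a a' : X) (b b' : Y) (c c' : Z) :
    emb (e23 X Y Z) x (a, b, c) (a', b', c') = if a = a' then x (b, c) (b', c') else 0 :=
  emb_apply (e23 X Y Z) x _ _

lemma slice12_emb23 (κ : Matrix (Y × Z) (Y × Z) ℂ) (k l : Z) :
    slice (e12 X Y Z) k l (emb (e23 X Y Z) κ) =
      emb (Equiv.prodComm X Y) (slice (Equiv.refl (Y × Z)) k l κ) := by
  ext ⟨a, b⟩ ⟨a', b'⟩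
  rw [emb_snd_apply]
  exact emb23_apply κ a a' b b' k l

lemma slice12_emb13 (κ : Matrix (X × Z) (X × Z) ℂ) (k l : Z) :
    slice (e12 X Y Z) k l (emb (e13 X Y Z) κ) =
      emb (Equiv.refl (X × Y)) (slice (Equiv.refl (X × Z)) k l κ) := by
  ext ⟨a, b⟩ ⟨a', b'⟩
  rw [emb_fst_apply]
  exact emb13_apply κ a a' b b' k l

lemma ptr12_emb23 (κ : Matrix (Y × Z) (Y × Z) ℂ) :
    ptr (e12 X Y Z) (emb (e23 X Y Z) κ) = emb (Equiv.prodComm X Y) (ptr (Equiv.refl (Y × Z)) κ) := by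
  simp only [ptr_eq_sum, slice12_emb23, map_sum]

lemma ptr12_emb13 (κ : Matrix (X × Z) (X × Z) ℂ) :
    ptr (e12 X Y Z) (emb (e13 X Y Z) κ) = emb (Equiv.refl (X × Y)) (ptr (Equiv.refl (X × Z)) κ) := by
  simp only [ptr_eq_sum, slice12_emb13, map_sum]

lemma ptr13_emb23 (κ : Matrix (Y × Z) (Y × Z) ℂ) :
    ptr (e13 X Y Z) (emb (e23 X Y Z) κ) =
      emb (Equiv.prodComm X Z) (ptr (Equiv.prodComm Y Z) κ) := by
  simp only [ptr_eq_sum, map_sum]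
  refine Finset.sum_congr rfl fun b _ => ?_
  ext ⟨a, c⟩ ⟨a', c'⟩
  rw [emb_snd_apply]
  exact emb23_apply κ a a' b b c c'

lemma ptr23_emb13 (κ : Matrix (X × Z) (X × Z) ℂ) :
    ptr (e23 X Y Z) (emb (e13 X Y Z) κ) =
      emb (Equiv.prodComm Y Z) (ptr (Equiv.prodComm X Z) κ) := by
  simp only [ptr_eq_sum, map_sum]
  refine Finset.sum_congr rfl fun a _ => ?_
  ext ⟨b, c⟩ ⟨b₁, c₁⟩
  rw [emb_snd_apply]
  exact emb13_apply κ a a b b₁ c c₁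

/-- An operator on the first system, lifted through the first and third ones. -/
lemma emb13_fst (x : Matrix X X ℂ) :
    emb (e13 X Y Z) (emb (Equiv.refl (X × Z)) x) = emb (Equiv.refl (X × Y × Z)) x := by
  ext ⟨a, b, c⟩ ⟨a', b', c'⟩
  rw [emb13_apply, emb_fst_apply, emb_fst_apply]
  by_cases h : b = b' <;> by_cases h' : c = c' <;> simp [h, h']

lemma emb12_fst (x : Matrix X X ℂ) :
    emb (e12 X Y Z) (emb (Equiv.refl (X × Y)) x) = emb (Equiv.refl (X × Y × Z)) x := by
  ext ⟨a, b, c⟩ ⟨a', b', c'⟩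
  rw [emb12_apply, emb_fst_apply, emb_fst_apply]
  by_cases h : b = b' <;> by_cases h' : c = c' <;> simp [h, h']

lemma emb12_snd (y : Matrix Y Y ℂ) :
    emb (e12 X Y Z) (emb (Equiv.prodComm X Y) y) =
      emb (e23 X Y Z) (emb (Equiv.refl (Y × Z)) y) := by
  ext ⟨a, b, c⟩ ⟨a', b', c'⟩
  rw [emb12_apply, emb_snd_apply, emb23_apply, emb_fst_apply]
  by_cases h : a = a' <;> by_cases h' : c = c' <;> simp [h, h']

lemma emb13_snd (z : Matrix Z Z ℂ) :
    emb (e13 X Y Z) (emb (Equiv.prodComm X Z) z) =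
      emb (e23 X Y Z) (emb (Equiv.prodComm Y Z) z) := by
  ext ⟨a, b, c⟩ ⟨a', b', c'⟩
  rw [emb13_apply, emb_snd_apply, emb23_apply, emb_snd_apply]
  by_cases h : a = a' <;> by_cases h' : b = b' <;> simp [h, h']

lemma emb_fst_comm_emb23 (x : Matrix X X ℂ) (κ : Matrix (Y × Z) (Y × Z) ℂ) :
    emb (Equiv.refl (X × Y × Z)) x * emb (e23 X Y Z) κ =
      emb (e23 X Y Z) κ * emb (Equiv.refl (X × Y × Z)) x :=
  emb_refl_comm x κ

lemma ptr_snd_ptr13 (T : Matrix (X × Y × Z) (X × Y × Z) ℂ) :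
    ptr (Equiv.prodComm X Z) (ptr (e13 X Y Z) T) = ptr (Equiv.prodComm Y Z) (ptr (e23 X Y Z) T) := by
  ext c c'
  exact Finset.sum_comm

lemma ptr_fst_ptr23 (T : Matrix (X × Y × Z) (X × Y × Z) ℂ) :
    ptr (Equiv.refl (Y × Z)) (ptr (e23 X Y Z) T) = ptr (Equiv.prodComm X Y) (ptr (e12 X Y Z) T) := by
  ext c c'
  exact Finset.sum_comm

lemma ptr_fst_ptr13 (T : Matrix (X × Y × Z) (X × Y × Z) ℂ) :
    ptr (Equiv.refl (X × Z)) (ptr (e13 X Y Z) T) = ptr (Equiv.refl (X × Y)) (ptr (e12 X Y Z) T) := by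
  ext c c'
  exact Finset.sum_comm

/-- Cyclicity of the partial trace over the first system. -/
lemma ptr_snd_cyc (x : Matrix X X ℂ) (R : Matrix (X × Y) (X × Y) ℂ) :
    ptr (Equiv.prodComm X Y) (emb (Equiv.refl (X × Y)) x * R) =
      ptr (Equiv.prodComm X Y) (R * emb (Equiv.refl (X × Y)) x) := by
  ext b b'
  change ∑ a, (emb (Equiv.refl (X × Y)) x * R) (a, b) (a, b') =
    ∑ a, (R * emb (Equiv.refl (X × Y)) x) (a, b) (a, b')
  simp only [Matrix.mul_apply, Fintype.sum_prod_type, emb_fst_apply, ite_mul, zero_mul, mul_ite,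
    mul_zero, Finset.sum_ite_eq, Finset.sum_ite_eq', Finset.mem_univ, if_true]
  rw [Finset.sum_comm]
  simp only [mul_comm]

end Tripartite

/-! ### Structure of Markov states -/

section MarkovStructure

set_option linter.unusedSectionVars false

variable {X Y Z J : Type*} [Fintype X] [DecidableEq X] [Fintype Y] [DecidableEq Y]
  [Fintype Z] [DecidableEq Z] [Fintype J] [DecidableEq J]

lemma cfc_sqrt_conjTranspose (M : Matrix X X ℂ) : (cfc Real.sqrt M)ᴴ = cfc Real.sqrt M :=
  cfc_conjTranspose _ _

/-- The blocks of a positive matrix in terms of those of its square root. -/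
lemma sum_slice_sqrt {κ : Matrix (Y × Z) (Y × Z) ℂ} (hκ : κ.PosSemidef) (k l : Z) :
    ∑ j, slice (Equiv.refl (Y × Z)) k j (cfc Real.sqrt κ) *
      slice (Equiv.refl (Y × Z)) j l (cfc Real.sqrt κ) = slice (Equiv.refl (Y × Z)) k l κ := by
  rw [← slice_mul, sqrt_mul_sqrt_cfc hκ]

/-- If two families of operators, diagonal in product bases, agree on `τ`, then so do all
functions of their eigenvalues. -/
lemma diag_functions {τ : Matrix (X × Y) (X × Y) ℂ} {V : Matrix Y Y ℂ} {V' : Matrix X X ℂ}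
    (hV : V * Vᴴ = 1) (hV' : Vᴴ * V = 1) (hW : V' * V'ᴴ = 1) (hW' : V'ᴴ * V' = 1)
    {m : Y → Matrix Z Z ℂ} {m' : X → Matrix Z Z ℂ}
    (h : ∀ k l, emb (Equiv.prodComm X Y) (V * diagonal (fun b => m b k l) * Vᴴ) * τ =
      emb (Equiv.refl (X × Y)) (V' * diagonal (fun a => m' a k l) * V'ᴴ) * τ)
    (f : Matrix Z Z ℂ → ℂ) :
    emb (Equiv.prodComm X Y) (V * diagonal (fun b => f (m b)) * Vᴴ) * τ =
      emb (Equiv.refl (X × Y)) (V' * diagonal (fun a => f (m' a)) * V'ᴴ) * τ := by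
  obtain ⟨P, hP⟩ : ∃ P, P = emb (Equiv.prodComm X Y) V := ⟨_, rfl⟩
  obtain ⟨Q, hQ⟩ : ∃ Q, Q = emb (Equiv.refl (X × Y)) V' := ⟨_, rfl⟩
  have hPP : P * Pᴴ = 1 := by rw [hP, ← map_conjTranspose, ← map_mul, hV, map_one]
  have hPP' : Pᴴ * P = 1 := by rw [hP, ← map_conjTranspose, ← map_mul, hV', map_one]
  have hQQ : Q * Qᴴ = 1 := by rw [hQ, ← map_conjTranspose, ← map_mul, hW, map_one]
  have hQQ' : Qᴴ * Q = 1 := by rw [hQ, ← map_conjTranspose, ← map_mul, hW', map_one]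
  obtain ⟨τ', hτ'⟩ : ∃ τ', τ' = Qᴴ * Pᴴ * τ := ⟨_, rfl⟩
  have hPQ : Q * P = P * Q := by rw [hP, hQ, emb_refl_comm]
  have hτ : τ = Q * P * τ' := by
    rw [hPQ, hτ']
    calc τ = P * ((Q * Qᴴ) * (Pᴴ * τ)) := by
          rw [hQQ, Matrix.one_mul, ← Matrix.mul_assoc, hPP, Matrix.one_mul]
      _ = _ := by simp only [Matrix.mul_assoc]
  have e1 : ∀ d : Y → ℂ, emb (Equiv.prodComm X Y) (V * diagonal d * Vᴴ) * τ =
      Q * P * (emb (Equiv.prodComm X Y) (diagonal d) * τ') := by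
    intro d
    rw [map_mul, map_mul, map_conjTranspose, ← hP, hτ]
    calc _ = P * emb (Equiv.prodComm X Y) (diagonal d) * Pᴴ * ((Q * P) * τ') := by
          simp only [Matrix.mul_assoc]
      _ = P * emb (Equiv.prodComm X Y) (diagonal d) * (Pᴴ * P) * Q * τ' := by
          rw [hPQ]; simp only [Matrix.mul_assoc]
      _ = P * (emb (Equiv.prodComm X Y) (diagonal d) * Q) * τ' := by
          rw [hPP', Matrix.mul_one]; simp only [Matrix.mul_assoc]
      _ = _ := by
          rw [hQ, ← emb_refl_comm, ← hQ, hPQ]; simp only [Matrix.mul_assoc]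
  have e2 : ∀ d : X → ℂ, emb (Equiv.refl (X × Y)) (V' * diagonal d * V'ᴴ) * τ =
      Q * P * (emb (Equiv.refl (X × Y)) (diagonal d) * τ') := by
    intro d
    rw [map_mul, map_mul, map_conjTranspose, ← hQ, hτ]
    calc _ = Q * emb (Equiv.refl (X × Y)) (diagonal d) * (Qᴴ * Q) * P * τ' := by
          simp only [Matrix.mul_assoc]
      _ = Q * (emb (Equiv.refl (X × Y)) (diagonal d) * P) * τ' := by
          rw [hQQ', Matrix.mul_one]; simp only [Matrix.mul_assoc]
      _ = _ := by
          rw [hP, emb_refl_comm, ← hP]; simp only [Matrix.mul_assoc]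
  have hcan : ∀ {R S : Matrix (X × Y) (X × Y) ℂ}, Q * P * R = Q * P * S → R = S := by
    intro R S hRS
    have h1 := congrArg (fun M => Pᴴ * (Qᴴ * M)) hRS
    simp only [Matrix.mul_assoc] at h1
    simp only [← Matrix.mul_assoc Qᴴ Q, hQQ', Matrix.one_mul, ← Matrix.mul_assoc Pᴴ P, hPP'] at h1
    exact h1
  have d1 : ∀ (d : Y → ℂ) a b x, (emb (Equiv.prodComm X Y) (diagonal d) * τ') (a, b) x =
      d b * τ' (a, b) x := by
    intro d a b x
    simp [Matrix.mul_apply, Fintype.sum_prod_type, emb_snd_apply, diagonal_apply]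
  have d2 : ∀ (d : X → ℂ) a b x, (emb (Equiv.refl (X × Y)) (diagonal d) * τ') (a, b) x =
      d a * τ' (a, b) x := by
    intro d a b x
    simp [Matrix.mul_apply, Fintype.sum_prod_type, emb_fst_apply, diagonal_apply]
  rw [e1, e2]
  congr 1
  ext ⟨a, b⟩ x
  rw [d1, d2]
  by_cases hz : τ' (a, b) x = 0
  · rw [hz, mul_zero, mul_zero]
  · have : m b = m' a := by
      ext k l
      have h1 := h k l
      rw [e1, e2] at h1
      have h2 := congrFun (congrFun (hcan h1) (a, b)) x
      rw [d1, d2] at h2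
      exact mul_right_cancel₀ hz h2
    rw [this]

/-- A state on `XYZ` which is Markov with respect to both orders `X – Y – Z` and `Y – X – Z`: its
`YZ`-marginal is block diagonal in an orthonormal basis of `Y`, with the conditional state on `Z`
being the square of `m b`, and this label can be read off from `X` as well as from `Y`. -/
theorem markov_structure {T : Matrix (X × Y × Z) (X × Y × Z) ℂ} (hT : T.PosSemidef)
    (h1 : vNEntropy (ptr (e12 X Y Z) T) + vNEntropy (ptr (e23 X Y Z) T) -
      vNEntropy (ptr (Equiv.prodComm X Y) (ptr (e12 X Y Z) T)) - vNEntropy T = 0)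
    (h2 : vNEntropy (ptr (e12 X Y Z) T) + vNEntropy (ptr (e13 X Y Z) T) -
      vNEntropy (ptr (Equiv.refl (X × Y)) (ptr (e12 X Y Z) T)) - vNEntropy T = 0) :
    ∃ (V : Matrix Y Y ℂ) (lam : Y → ℝ) (m : Y → Matrix Z Z ℂ) (V' : Matrix X X ℂ)
      (m' : X → Matrix Z Z ℂ), V * Vᴴ = 1 ∧ Vᴴ * V = 1 ∧ V' * V'ᴴ = 1 ∧ V'ᴴ * V' = 1 ∧
      (∀ b, 0 ≤ lam b) ∧
      (ptr (Equiv.prodComm X Y) (ptr (e12 X Y Z) T) = V * diagonal (fun b => (lam b : ℂ)) * Vᴴ) ∧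
      (∀ k l, slice (Equiv.refl (Y × Z)) k l (ptr (e23 X Y Z) T) =
        V * diagonal (fun b => (lam b : ℂ) * (m b * m b) k l) * Vᴴ) ∧
      (∀ b, (m b).IsHermitian) ∧ (∀ b, lam b ≠ 0 → (m b * m b).trace = 1) ∧
      ∀ f : Matrix Z Z ℂ → ℂ,
        emb (Equiv.prodComm X Y) (V * diagonal (fun b => f (m b)) * Vᴴ) * ptr (e12 X Y Z) T =
        emb (Equiv.refl (X × Y)) (V' * diagonal (fun a => f (m' a)) * V'ᴴ) * ptr (e12 X Y Z) T := by
  obtain ⟨τ, hτd⟩ : ∃ τ, τ = ptr (e12 X Y Z) T := ⟨_, rfl⟩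
  obtain ⟨κ, hκd⟩ : ∃ κ, κ = ptr (e23 X Y Z) T := ⟨_, rfl⟩
  obtain ⟨κ', hκ'd⟩ : ∃ κ', κ' = ptr (e13 X Y Z) T := ⟨_, rfl⟩
  obtain ⟨η, hηd⟩ : ∃ η, η = ptr (Equiv.prodComm X Y) τ := ⟨_, rfl⟩
  obtain ⟨η', hη'd⟩ : ∃ η', η' = ptr (Equiv.refl (X × Y)) τ := ⟨_, rfl⟩
  have hηκ : ptr (Equiv.refl (Y × Z)) κ = η := by rw [hκd, hηd, hτd, ptr_fst_ptr23]
  have hη'κ' : ptr (Equiv.refl (X × Z)) κ' = η' := by rw [hκ'd, hη'd, hτd, ptr_fst_ptr13]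
  have hτ : τ.PosSemidef := by rw [hτd]; exact ptr_posSemidef _ hT
  have hκ : κ.PosSemidef := by rw [hκd]; exact ptr_posSemidef _ hT
  have hκ' : κ'.PosSemidef := by rw [hκ'd]; exact ptr_posSemidef _ hT
  have hη : η.PosSemidef := by rw [hηd]; exact ptr_posSemidef _ hτ
  have hη' : η'.PosSemidef := by rw [hη'd]; exact ptr_posSemidef _ hτ
  rw [← hτd, ← hκd, ← hηd] at h1
  rw [← hτd, ← hκ'd, ← hη'd] at h2
  have p1 := petz_entropy (emb (e12 X Y Z)) (emb (e23 X Y Z)) (emb (Equiv.prodComm X Y)) hT hτ hκ hη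
    (fun z => by rw [trace_emb_mul, hτd])
    (fun z => by rw [trace_emb_mul, ptr12_emb23, hηκ])
    (fun z => by rw [trace_emb_mul, hκd])
    (fun z => by rw [trace_emb_mul, hηd]) h1
  have p2 := petz_entropy (emb (e12 X Y Z)) (emb (e13 X Y Z)) (emb (Equiv.refl (X × Y))) hT hτ hκ'
    hη'
    (fun z => by rw [trace_emb_mul, hτd])
    (fun z => by rw [trace_emb_mul, ptr12_emb13, hη'κ'])
    (fun z => by rw [trace_emb_mul, hκ'd])
    (fun z => by rw [trace_emb_mul, hη'd]) h2
  obtain ⟨G, hGd⟩ : ∃ G, G = cfc Real.sqrt τ := ⟨_, rfl⟩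
  have hG : Gᴴ = G := by rw [hGd, cfc_sqrt_conjTranspose]
  have hGG : G * G = τ := by rw [hGd, sqrt_mul_sqrt_cfc hτ]
  rw [← hGd] at p1 p2
  obtain ⟨S, hSd⟩ : ∃ S : Z → Z → Matrix Y Y ℂ, S = fun k l =>
    slice (Equiv.refl (Y × Z)) k l (cfc Real.sqrt κ) := ⟨_, rfl⟩
  obtain ⟨S', hS'd⟩ : ∃ S' : Z → Z → Matrix X X ℂ, S' = fun k l =>
    slice (Equiv.refl (X × Z)) k l (cfc Real.sqrt κ') := ⟨_, rfl⟩
  have r1 : ∀ k l, emb (Equiv.prodComm X Y) (S k l * cfc isq η) * G =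
      slice (e12 X Y Z) k l (cfc Real.sqrt T) := by
    intro k l
    rw [← p1, slice_mul_emb, slice12_emb23, map_mul, Matrix.mul_assoc, hSd]
  have r2 : ∀ k l, emb (Equiv.refl (X × Y)) (S' k l * cfc isq η') * G =
      slice (e12 X Y Z) k l (cfc Real.sqrt T) := by
    intro k l
    rw [← p2, slice_mul_emb, slice12_emb13, map_mul, Matrix.mul_assoc, hS'd]
  have rr : ∀ k l, (slice (e12 X Y Z) k l (cfc Real.sqrt T))ᴴ =
      slice (e12 X Y Z) l k (cfc Real.sqrt T) := by
    intro k l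
    rw [← slice_conjTranspose, cfc_sqrt_conjTranspose]
  have hSS : ∀ k l, ∑ j, S k j * S j l = slice (Equiv.refl (Y × Z)) k l κ := by
    intro k l
    rw [hSd]
    exact sum_slice_sqrt hκ k l
  obtain ⟨V, lam, m, hV, hV', hlam, hηV, hSV, hm, htr, hy⟩ := double_markov
    (emb (Equiv.prodComm X Y)) hG hη (fun x => by rw [trace_emb_mul, hGG, hηd]) S
    (fun k l => by rw [hSd]; simp only [← slice_conjTranspose, cfc_sqrt_conjTranspose])
    (by simp only [hSS]; rw [← ptr_eq_sum, hηκ])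
    (fun k l => emb (Equiv.refl (X × Y)) (S' k l * cfc isq η'))
    (fun k l x => emb_refl_comm _ _)
    (fun k l => by rw [r1, r2]) (fun k l => by rw [r2, r2, rr])
  obtain ⟨W, lam', m', hW, hW', -, -, -, -, -, hy'⟩ := double_markov
    (emb (Equiv.refl (X × Y))) hG hη' (fun x => by rw [trace_emb_mul, hGG, hη'd]) S'
    (fun k l => by rw [hS'd]; simp only [← slice_conjTranspose, cfc_sqrt_conjTranspose])
    (by
      rw [hS'd]
      simp only [sum_slice_sqrt hκ']
      rw [← ptr_eq_sum, hη'κ'])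
    (fun k l => emb (Equiv.prodComm X Y) (S k l * cfc isq η))
    (fun k l x => (emb_refl_comm _ _).symm)
    (fun k l => by rw [r1, r2]) (fun k l => by rw [r1, r1, rr])
  refine ⟨V, lam, m, W, m', hV, hV', hW, hW', hlam, ?_, ?_, hm, htr, ?_⟩
  · rw [← hτd, ← hηd, hηV]
  · intro k l
    rw [← hκd, ← hSS]
    simp only [hSV, conj_diag_mul hV']
    rw [← Finset.sum_mul, ← Finset.mul_sum]
    congr 2
    ext b b'
    rw [Matrix.sum_apply]
    by_cases h : b = b'
    · subst h
      simp only [diagonal_apply_eq, Matrix.mul_apply, Finset.mul_sum]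
      refine Finset.sum_congr rfl fun j _ => ?_
      have : ((√(lam b) : ℝ) : ℂ) * ((√(lam b) : ℝ) : ℂ) = (lam b : ℂ) := by
        rw [← Complex.ofReal_mul, Real.mul_self_sqrt (hlam b)]
      rw [← this]
      ring
    · simp [h]
  · intro f
    rw [← hτd, ← hGG, ← Matrix.mul_assoc, ← Matrix.mul_assoc]
    congr 1
    refine diag_functions hV hV' hW hW' (fun k l => ?_) f
    rw [hy, hy', r1, r2]

/-- Orthogonality of the `Z`-marginals selected by a label that can be read off from `X` as well
as from `Y`, in a state that is Markov in the order `X – Z – Y`. -/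
theorem orthogonal_marginals {T : Matrix (X × Y × Z) (X × Y × Z) ℂ} (hT : T.PosSemidef)
    (h3 : vNEntropy (ptr (e13 X Y Z) T) + vNEntropy (ptr (e23 X Y Z) T) -
      vNEntropy (ptr (Equiv.prodComm X Z) (ptr (e13 X Y Z) T)) - vNEntropy T = 0)
    {R : J → Matrix Y Y ℂ} {R' : J → Matrix X X ℂ} (hR : ∀ j, (R j)ᴴ = R j)
    (hRR : ∀ i j, i ≠ j → R i * R j = 0) (hR1 : ∑ j, R j = 1)
    (h : ∀ j, emb (Equiv.prodComm X Y) (R j) * ptr (e12 X Y Z) T =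
      emb (Equiv.refl (X × Y)) (R' j) * ptr (e12 X Y Z) T) {i j : J} (hij : i ≠ j) :
    ptr (Equiv.prodComm Y Z) (emb (Equiv.refl (Y × Z)) (R i) * ptr (e23 X Y Z) T) *
      ptr (Equiv.prodComm Y Z) (emb (Equiv.refl (Y × Z)) (R j) * ptr (e23 X Y Z) T) = 0 := by
  obtain ⟨κ, hκd⟩ : ∃ κ, κ = ptr (e23 X Y Z) T := ⟨_, rfl⟩
  obtain ⟨κ', hκ'd⟩ : ∃ κ', κ' = ptr (e13 X Y Z) T := ⟨_, rfl⟩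
  obtain ⟨η, hηd⟩ : ∃ η, η = ptr (Equiv.prodComm X Z) κ' := ⟨_, rfl⟩
  have hηκ : ptr (Equiv.prodComm Y Z) κ = η := by rw [hκd, hηd, hκ'd, ptr_snd_ptr13]
  have hκ : κ.PosSemidef := by rw [hκd]; exact ptr_posSemidef _ hT
  have hκ' : κ'.PosSemidef := by rw [hκ'd]; exact ptr_posSemidef _ hT
  have hη : η.PosSemidef := by rw [hηd]; exact ptr_posSemidef _ hκ'
  rw [← hκd, ← hκ'd, ← hηd] at h3
  have p := petz_entropy (emb (e13 X Y Z)) (emb (e23 X Y Z)) (emb (Equiv.prodComm X Z)) hT hκ' hκ hη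
    (fun z => by rw [trace_emb_mul, hκ'd])
    (fun z => by rw [trace_emb_mul, ptr13_emb23, hηκ])
    (fun z => by rw [trace_emb_mul, hκd])
    (fun z => by rw [trace_emb_mul, hηd]) h3
  -- the label agrees on the square root of the full state
  have hlabel : ∀ j, emb (e23 X Y Z) (emb (Equiv.refl (Y × Z)) (R j)) * cfc Real.sqrt T =
      emb (Equiv.refl (X × Y × Z)) (R' j) * cfc Real.sqrt T := by
    intro j
    rw [← emb12_snd, ← emb12_fst, ← sub_eq_zero, ← Matrix.sub_mul, ← map_sub]
    refine (map_mul_eq_zero (emb (e12 X Y Z)) (cfc_sqrt_conjTranspose T)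
      (ptr_posSemidef (e12 X Y Z) hT) (fun x => by
        rw [sqrt_mul_sqrt_cfc hT, trace_emb_mul])).2 ?_
    rw [Matrix.sub_mul, h, sub_self]
  obtain ⟨δ, hδd⟩ : ∃ δ : J → Matrix Z Z ℂ, δ = fun j =>
    ptr (Equiv.prodComm Y Z) (emb (Equiv.refl (Y × Z)) (R j) * κ) := ⟨_, rfl⟩
  have hδ' : ∀ j, ptr (Equiv.prodComm X Z) (emb (Equiv.refl (X × Z)) (R' j) * κ') = δ j := by
    intro j
    have h0 : emb (e23 X Y Z) (emb (Equiv.refl (Y × Z)) (R j)) * T =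
        emb (Equiv.refl (X × Y × Z)) (R' j) * T := by
      rw [← sqrt_mul_sqrt_cfc hT, ← Matrix.mul_assoc, hlabel, Matrix.mul_assoc]
    rw [hδd]
    simp only
    rw [hκd, hκ'd, ← ptr_emb_mul, ← ptr_emb_mul, h0, ← ptr_snd_ptr13, emb13_fst]
  -- the label `j` on `Y` annihilates the part of the state selected by another label on `X`
  have hzero : ∀ i j, j ≠ i → emb (Equiv.refl (Y × Z)) (R j) * (cfc Real.sqrt κ *
      emb (Equiv.prodComm Y Z) (cfc isq η * δ i)) = 0 := by
    intro i j hji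
    have h0 : emb (e23 X Y Z) (emb (Equiv.refl (Y × Z)) (R j)) *
        (emb (Equiv.refl (X × Y × Z)) (R' i) * cfc Real.sqrt T) = 0 := by
      rw [← hlabel, ← Matrix.mul_assoc, ← map_mul, ← map_mul, hRR j i hji, map_zero, map_zero,
        Matrix.zero_mul]
    have h1 : emb (e23 X Y Z) (emb (Equiv.refl (Y × Z)) (R j) * (cfc Real.sqrt κ *
        emb (Equiv.prodComm Y Z) (cfc isq η))) *
          emb (e13 X Y Z) (emb (Equiv.refl (X × Z)) (R' i) * κ') = 0 := by
      rw [← Matrix.zero_mul (emb (e13 X Y Z) (cfc Real.sqrt κ')), ← h0, ← p,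
        map_mul (emb (e13 X Y Z)), map_mul (emb (e13 X Y Z)), emb13_snd, emb13_fst,
        map_mul (emb (e23 X Y Z)), map_mul (emb (e23 X Y Z))]
      have hk : emb (e13 X Y Z) κ' =
          emb (e13 X Y Z) (cfc Real.sqrt κ') * emb (e13 X Y Z) (cfc Real.sqrt κ') := by
        rw [← map_mul, sqrt_mul_sqrt_cfc hκ']
      have c1 := emb_fst_comm_emb23 (R' i) (cfc Real.sqrt κ)
      have c2 := emb_fst_comm_emb23 (R' i) (emb (Equiv.prodComm Y Z) (cfc isq η))
      rw [hk]
      simp only [← Matrix.mul_assoc]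
      congr 2
      rw [Matrix.mul_assoc _ _ (emb (Equiv.refl (X × Y × Z)) (R' i)), ← c2]
      simp only [Matrix.mul_assoc]
      rw [← Matrix.mul_assoc (emb (e23 X Y Z) (cfc Real.sqrt κ)), ← c1]
      simp only [Matrix.mul_assoc]
    have h2 := congrArg (ptr (e23 X Y Z)) h1
    rw [ptr_emb_mul, ptr23_emb13, ptr_zero, hδ'] at h2
    rw [map_mul, ← h2]
    simp only [Matrix.mul_assoc]
  have hself : emb (Equiv.refl (Y × Z)) (R j) * (cfc Real.sqrt κ *
      emb (Equiv.prodComm Y Z) (cfc isq η * δ j)) = cfc Real.sqrt κ *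
      emb (Equiv.prodComm Y Z) (cfc isq η * δ j) := by
    have h1 : (∑ k, emb (Equiv.refl (Y × Z)) (R k)) * (cfc Real.sqrt κ *
      emb (Equiv.prodComm Y Z) (cfc isq η * δ j)) = cfc Real.sqrt κ *
      emb (Equiv.prodComm Y Z) (cfc isq η * δ j) := by
      rw [← map_sum, hR1, map_one, Matrix.one_mul]
    rw [Finset.sum_mul, Finset.sum_eq_single j (fun k _ hk => hzero j k hk) (by simp)] at h1
    exact h1
  have hδsp : ∀ j, cfc sp η * δ j = δ j := by
    intro j
    have h1 := support_marginal (emb (Equiv.prodComm Y Z)) hκ hη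
      (fun x => by rw [trace_emb_mul, hηκ])
    rw [hδd]
    simp only
    rw [← ptr_emb_mul, ← Matrix.mul_assoc, ← emb_refl_comm, Matrix.mul_assoc, h1]
  have hδh : ∀ j, (δ j)ᴴ = δ j := by
    intro j
    have e : ∀ M : Matrix (Y × Z) (Y × Z) ℂ, (ptr (Equiv.prodComm Y Z) M)ᴴ =
        ptr (Equiv.prodComm Y Z) Mᴴ := by
      intro M
      simp only [ptr_eq_sum, conjTranspose_sum, slice_conjTranspose]
    rw [hδd]
    simp only
    rw [e, conjTranspose_mul, ← map_conjTranspose, hR, hκ.1.eq, ptr_snd_cyc]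
  have hfin : emb (Equiv.prodComm Y Z) (δ i * cfc isq η) * (κ *
      emb (Equiv.prodComm Y Z) (cfc isq η * δ j)) = 0 := by
    have h1 := congrArg conjTranspose (hzero i j hij.symm)
    rw [conjTranspose_mul, conjTranspose_mul, conjTranspose_zero, ← map_conjTranspose,
      ← map_conjTranspose, conjTranspose_mul, hδh, cfc_conjTranspose, cfc_sqrt_conjTranspose,
      hR] at h1
    rw [← sqrt_mul_sqrt_cfc hκ, Matrix.mul_assoc, ← hself, ← Matrix.mul_assoc, ← Matrix.mul_assoc,
      h1, Matrix.zero_mul]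
  have h5 := congrArg (ptr (Equiv.prodComm Y Z)) hfin
  rw [ptr_emb_mul, ptr_mul_emb, ptr_zero, hηκ] at h5
  have h6 : δ i * δ j = 0 := by
    rw [← hδsp j, ← isq_mul_isq_mul hη, ← h5]
    simp only [Matrix.mul_assoc]
  rw [← hκd]
  rw [hδd] at h6
  exact h6

end MarkovStructure

/-! ### Block entropies and label projections -/

section Final

set_option linter.unusedSectionVars false

variable {X Y Z J : Type*} [Fintype X] [DecidableEq X] [Fintype Y] [DecidableEq Y]
  [Fintype Z] [DecidableEq Z] [Fintype J] [DecidableEq J]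

/-- The entropy of a state that is block diagonal in the basis of `Y` given by `V`. -/
lemma vNEntropy_blocks {κ : Matrix (Y × Z) (Y × Z) ℂ} {V : Matrix Y Y ℂ} (hV : Vᴴ * V = 1)
    {lam : Y → ℝ} {ν : Y → Matrix Z Z ℂ} (hν : ∀ b, (ν b).PosSemidef)
    (hν1 : ∀ b, lam b ≠ 0 → (ν b).trace = 1)
    (h : ∀ k l, slice (Equiv.refl (Y × Z)) k l κ =
      V * diagonal (fun b => (lam b : ℂ) * ν b k l) * Vᴴ) :
    vNEntropy κ * Real.log 2 = vNEntropy (V * diagonal (fun b => (lam b : ℂ)) * Vᴴ) * Real.log 2 +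
      ∑ b, lam b * (vNEntropy (ν b) * Real.log 2) := by
  choose F r hF hF' hr hf using fun b => exists_spectral (hν b)
  have idν : ∀ b, ν b = F b * diagonal (fun i => ((r b i : ℝ) : ℂ)) * (F b)ᴴ := by
    intro b
    rw [← hf b fun x => x, cfc_self (hν b) fun _ _ => rfl]
  obtain ⟨U, hUd⟩ : ∃ U : Matrix (Y × Z) (Y × Z) ℂ, U = Matrix.of fun x y =>
    V x.1 y.1 * F y.1 x.2 y.2 := ⟨_, rfl⟩
  have hU : Uᴴ * U = 1 := by
    ext ⟨b, c⟩ ⟨b', c'⟩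
    have h1 := congrFun (congrFun hV b) b'
    rw [Matrix.mul_apply] at h1
    have h2 : (Uᴴ * U) (b, c) (b', c') = (∑ x, Vᴴ b x * V x b') * ∑ y, (F b)ᴴ c y * F b' y c' := by
      rw [Matrix.mul_apply, Fintype.sum_prod_type, Finset.sum_mul_sum]
      refine Finset.sum_congr rfl fun x _ => Finset.sum_congr rfl fun y _ => ?_
      simp only [hUd, conjTranspose_apply, of_apply, star_mul']
      ring
    rw [h2, h1]
    by_cases hb : b = b'
    · subst hb
      have h3 := congrFun (congrFun (hF' b) c) c'
      rw [Matrix.mul_apply] at h3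
      rw [h3]
      simp [Matrix.one_apply]
    · simp [hb]
  have hκ : κ = U * diagonal (fun x => ((lam x.1 * r x.1 x.2 : ℝ) : ℂ)) * Uᴴ := by
    ext ⟨b, c⟩ ⟨b', c'⟩
    have h1 : κ (b, c) (b', c') = (V * diagonal (fun b => (lam b : ℂ) * ν b c c') * Vᴴ) b b' := by
      rw [← h]
      rfl
    rw [h1, Matrix.mul_apply, Matrix.mul_apply, Fintype.sum_prod_type]
    refine Finset.sum_congr rfl fun x _ => ?_
    rw [mul_diagonal, idν x, Matrix.mul_apply, Finset.mul_sum, Finset.mul_sum, Finset.sum_mul]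
    refine Finset.sum_congr rfl fun y _ => ?_
    rw [mul_diagonal, mul_diagonal]
    simp only [hUd, conjTranspose_apply, of_apply, star_mul']
    push_cast
    ring
  rw [vNEntropy_diag _ hU hκ, vNEntropy_diag lam hV rfl, Fintype.sum_prod_type]
  simp only [fun b => vNEntropy_diag (r b) (hF' b) (idν b)]
  rw [← Finset.sum_neg_distrib, ← Finset.sum_neg_distrib, ← Finset.sum_add_distrib]
  refine Finset.sum_congr rfl fun b _ => ?_
  by_cases hb : lam b = 0
  · simp [hb]
  have h1 : ∑ c, r b c = 1 := by
    have h1 := hν1 b hb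
    rw [idν, trace_mul_comm, ← Matrix.mul_assoc, hF', Matrix.one_mul, trace_diagonal] at h1
    exact_mod_cast h1
  have h2 : ∀ c, lam b * r b c * Real.log (lam b * r b c) =
      r b c * (lam b * Real.log (lam b)) + lam b * (r b c * Real.log (r b c)) := by
    intro c
    by_cases hc : r b c = 0
    · simp [hc]
    · rw [Real.log_mul hb hc]
      ring
  simp only [h2, Finset.sum_add_distrib]
  rw [← Finset.sum_mul, h1, ← Finset.mul_sum]
  ring

lemma ptr_snd_fst_apply (x : Matrix Y Y ℂ) (κ : Matrix (Y × Z) (Y × Z) ℂ) (c c' : Z) :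
    ptr (Equiv.prodComm Y Z) (emb (Equiv.refl (Y × Z)) x * κ) c c' =
      (x * slice (Equiv.refl (Y × Z)) c c' κ).trace := by
  change ∑ b, (emb (Equiv.refl (Y × Z)) x * κ) (b, c) (b, c') =
    ∑ b, ∑ b', x b b' * κ (b', c) (b, c')
  refine Finset.sum_congr rfl fun b _ => ?_
  simp only [Matrix.mul_apply, Fintype.sum_prod_type, emb_fst_apply, ite_mul, zero_mul,
    Finset.sum_ite_eq, Finset.mem_univ, if_true]

lemma ptr_sum (e : X ≃ Y × Z) (M : J → Matrix X X ℂ) : ptr e (∑ j, M j) = ∑ j, ptr e (M j) := by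
  ext i i'
  simp only [ptr, of_apply, Matrix.sum_apply]
  exact Finset.sum_comm

/-- The projection, in the basis `V`, on the vectors with label `j`. -/
noncomputable def labelProj (V : Matrix Y Y ℂ) (m : Y → J) (j : J) : Matrix Y Y ℂ :=
  V * diagonal (fun b => if m b = j then 1 else 0) * Vᴴ

lemma labelProj_conjTranspose (V : Matrix Y Y ℂ) (m : Y → J) (j : J) :
    (labelProj V m j)ᴴ = labelProj V m j := by
  rw [labelProj, conjTranspose_mul, conjTranspose_mul, conjTranspose_conjTranspose,
    diagonal_conjTranspose, ← Matrix.mul_assoc]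
  congr 3
  funext b
  by_cases h : m b = j <;> simp [h]

lemma labelProj_mul {V : Matrix Y Y ℂ} (hV : Vᴴ * V = 1) (m : Y → J) {i j : J} (h : i ≠ j) :
    labelProj V m i * labelProj V m j = 0 := by
  rw [labelProj, labelProj, conj_diag_mul hV]
  have : (fun b => (if m b = i then (1 : ℂ) else 0) * (if m b = j then 1 else 0)) = fun _ => 0 := by
    funext b
    by_cases h1 : m b = i
    · have : m b ≠ j := by rw [h1]; exact h
      simp [this]
    · simp [h1]
  rw [this, diagonal_zero, Matrix.mul_zero, Matrix.zero_mul]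

lemma labelProj_mul_self {V : Matrix Y Y ℂ} (hV : Vᴴ * V = 1) (m : Y → J) (j : J) :
    labelProj V m j * labelProj V m j = labelProj V m j := by
  rw [labelProj, conj_diag_mul hV]
  congr 3
  funext b
  by_cases h1 : m b = j <;> simp [h1]

lemma labelProj_sum {V : Matrix Y Y ℂ} (hV : V * Vᴴ = 1) (m : Y → J) :
    ∑ j, labelProj V m j = 1 := by
  simp only [labelProj]
  rw [← Finset.sum_mul, ← Finset.mul_sum]
  have : ∑ j, diagonal (fun b => if m b = j then (1 : ℂ) else 0) = 1 := by
    ext b b'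
    rw [Matrix.sum_apply]
    by_cases h : b = b'
    · subst h
      simp
    · simp [h]
  rw [this, Matrix.mul_one, hV]

end Final

/-! ### Conclusion -/

section CondEntropy

set_option linter.unusedSectionVars false

variable {B C D J : Type*} [Fintype B] [DecidableEq B] [Fintype C] [DecidableEq C]
  [Fintype D] [DecidableEq D] [Fintype J] [DecidableEq J]

/-- Suppose the marginal on `BC` of a tripartite state `ω` on `BCD` is classical-quantum with
blocks `N (mJ b)` of weight `lam b`, and the marginals on `D` of the parts of `ω` with different
labels are orthogonal. Then `D` determines the label, so that the entropy of `C` given `D` is at most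
the average entropy of the blocks. -/
lemma cond_entropy_le [Nonempty J] {ω : Matrix (B × C × D) (B × C × D) ℂ} (hω : ω.PosSemidef)
    {V : Matrix B B ℂ} (hV : V * Vᴴ = 1) (hV' : Vᴴ * V = 1) {lam : B → ℝ}
    {mJ : B → J} {N : J → Matrix C C ℂ} (hN : ∀ j, (N j).PosSemidef)
    (hN1 : ∀ b, lam b ≠ 0 → (N (mJ b)).trace = 1)
    (hsl : ∀ k l, slice (Equiv.refl (B × C)) k l (ptr (e12 B C D) ω) =
      V * diagonal (fun b => (lam b : ℂ) * N (mJ b) k l) * Vᴴ)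
    (horth : ∀ i j, i ≠ j →
      ptr (Equiv.prodComm B D) (emb (Equiv.refl (B × D)) (labelProj V mJ i) * ptr (e13 B C D) ω) *
      ptr (Equiv.prodComm B D) (emb (Equiv.refl (B × D)) (labelProj V mJ j) * ptr (e13 B C D) ω) =
        0) :
    vNEntropy (ptr (e23 B C D) ω) * Real.log 2 ≤
      vNEntropy (ptr (Equiv.prodComm C D) (ptr (e23 B C D) ω)) * Real.log 2 +
        ∑ b, lam b * (vNEntropy (N (mJ b)) * Real.log 2) := by
  obtain ⟨R, hR⟩ : ∃ R, R = labelProj V mJ := ⟨_, rfl⟩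
  obtain ⟨E, hE⟩ : ∃ E : J → Matrix (C × D) (C × D) ℂ,
    E = fun j => ptr (e23 B C D) (emb (Equiv.refl (B × C × D)) (R j) * ω) := ⟨_, rfl⟩
  obtain ⟨p, hp⟩ : ∃ p : J → ℝ, p = fun j => ∑ b, if mJ b = j then lam b else 0 := ⟨_, rfl⟩
  have hEsum : ∑ j, E j = ptr (e23 B C D) ω := by
    rw [hE, ← ptr_sum, ← Finset.sum_mul, ← map_sum, hR, labelProj_sum hV, map_one, Matrix.one_mul]
  have hEpos : ∀ j, (E j).PosSemidef := by
    intro j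
    have : E j = ptr (e23 B C D) ((emb (Equiv.refl (B × C × D)) (R j))ᴴ * ω *
        emb (Equiv.refl (B × C × D)) (R j)) := by
      rw [← map_conjTranspose, hR, labelProj_conjTranspose, Matrix.mul_assoc, hE]
      rw [← hR]
      refine Eq.trans ?_ (ptr_snd_cyc (X := B) (Y := C × D) (R j)
        (ω * emb (Equiv.refl (B × C × D)) (R j))).symm
      rw [Matrix.mul_assoc, ← map_mul, hR, labelProj_mul_self hV', ← hR]
      exact ptr_snd_cyc (X := B) (Y := C × D) (R j) ω
    rw [this]
    exact ptr_posSemidef _ (hω.conjTranspose_mul_mul_same _)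
  have hED : ∀ j, ptr (Equiv.prodComm C D) (E j) =
      ptr (Equiv.prodComm B D) (emb (Equiv.refl (B × D)) (R j) * ptr (e13 B C D) ω) := by
    intro j
    rw [hE, ← ptr_snd_ptr13, ← emb13_fst, ptr_emb_mul]
  have hEC : ∀ j, ptr (Equiv.refl (C × D)) (E j) = (p j : ℂ) • N j := by
    intro j
    rw [hE, ptr_fst_ptr23, ← emb12_fst, ptr_emb_mul]
    ext c c'
    rw [ptr_snd_fst_apply, hsl, hR, labelProj, conj_diag_mul hV', trace_mul_comm,
      ← Matrix.mul_assoc, hV', Matrix.one_mul, trace_diagonal, Matrix.smul_apply, hp, smul_eq_mul]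
    push_cast
    rw [Finset.sum_mul]
    refine Finset.sum_congr rfl fun b _ => ?_
    by_cases h : mJ b = j <;> simp [h]
  have key := entropy_bound hEpos
    (fun i j hij => by rw [hED, hED, hR]; exact horth i j hij) hN hEC (by
      intro j hj
      rw [hp] at hj
      obtain ⟨b, _, hb⟩ := Finset.exists_ne_zero_of_sum_ne_zero hj
      by_cases h : mJ b = j
      · rw [if_pos h] at hb
        rw [← h]
        exact hN1 b hb
      · simp [h] at hb)
  rw [← ptr_sum, hEsum] at key
  refine key.trans_eq ?_
  rw [hp]
  simp only [Finset.sum_mul]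
  rw [Finset.sum_comm]
  congr 1
  refine Finset.sum_congr rfl fun b _ => ?_
  simp

end CondEntropy

/-- **Theorem 1′.** If `S(AB)+S(BC)-S(B)-S(ABC) = 0`, `S(CA)+S(AB)-S(A)-S(CAB) = 0`
and `S(AD)+S(DB)-S(D)-S(ADB) = 0`, then `S(ABC)+S(D) ≥ S(AB)+S(CD)`
(equivalently, `I(ABC;D) ≥ I(AB;CD)`). -/
theorem constrained_inequality'
    {A B C D : Type*} [Fintype A] [DecidableEq A] [Fintype B] [DecidableEq B]
    [Fintype C] [DecidableEq C] [Fintype D] [DecidableEq D]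
    (ρ : Matrix (A × B × C × D) (A × B × C × D) ℂ) (hρ : IsState ρ)
    (h1 : SAB ρ + SBC ρ - SB ρ - SABC ρ = 0)
    (h2 : SAC ρ + SAB ρ - SA ρ - SABC ρ = 0)
    (h3 : SAD ρ + SBD ρ - SD ρ - SABD ρ = 0) :
    SAB ρ + SCD ρ ≤ SABC ρ + SD ρ := by
  classical
  -- the marginals on `ABC`, `ABD` and `BCD`, in this order
  obtain ⟨T, hTd⟩ : ∃ T : Matrix (A × B × C) (A × B × C) ℂ, T = Matrix.of fun p q =>
    ∑ d, ρ (p.1, p.2.1, p.2.2, d) (q.1, q.2.1, q.2.2, d) := ⟨_, rfl⟩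
  obtain ⟨T', hT'd⟩ : ∃ T' : Matrix (A × B × D) (A × B × D) ℂ, T' = Matrix.of fun p q =>
    ∑ c, ρ (p.1, p.2.1, c, p.2.2) (q.1, q.2.1, c, q.2.2) := ⟨_, rfl⟩
  obtain ⟨ω, hωd⟩ : ∃ ω : Matrix (B × C × D) (B × C × D) ℂ, ω = Matrix.of fun p q =>
    ∑ a, ρ (a, p.1, p.2.1, p.2.2) (a, q.1, q.2.1, q.2.2) := ⟨_, rfl⟩
  have hT : T.PosSemidef := by
    have : T = ∑ d, ρ.submatrix (fun p : A × B × C => (p.1, p.2.1, p.2.2, d))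
        (fun p => (p.1, p.2.1, p.2.2, d)) := by
      ext p q
      rw [hTd, Matrix.sum_apply]
      rfl
    rw [this]
    exact posSemidef_sum _ fun d _ => hρ.1.submatrix _
  have hT' : T'.PosSemidef := by
    have : T' = ∑ c, ρ.submatrix (fun p : A × B × D => (p.1, p.2.1, c, p.2.2))
        (fun p => (p.1, p.2.1, c, p.2.2)) := by
      ext p q
      rw [hT'd, Matrix.sum_apply]
      rfl
    rw [this]
    exact posSemidef_sum _ fun d _ => hρ.1.submatrix _
  have hω : ω.PosSemidef := by
    have : ω = ∑ a, ρ.submatrix (fun p : B × C × D => (a, p.1, p.2.1, p.2.2))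
        (fun p => (a, p.1, p.2.1, p.2.2)) := by
      ext p q
      rw [hωd, Matrix.sum_apply]
      rfl
    rw [this]
    exact posSemidef_sum _ fun d _ => hρ.1.submatrix _
  have iAB : SAB ρ = vNEntropy (ptr (e12 A B C) T) := by rw [hTd]; rfl
  have iBC : SBC ρ = vNEntropy (ptr (e23 A B C) T) := by rw [hTd]; rfl
  have iAC : SAC ρ = vNEntropy (ptr (e13 A B C) T) := by rw [hTd]; rfl
  have iB : SB ρ = vNEntropy (ptr (Equiv.prodComm A B) (ptr (e12 A B C) T)) := by rw [hTd]; rfl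
  have iA : SA ρ = vNEntropy (ptr (Equiv.refl (A × B)) (ptr (e12 A B C) T)) := by rw [hTd]; rfl
  have iABC : SABC ρ = vNEntropy T := by rw [hTd]; rfl
  have iAD : SAD ρ = vNEntropy (ptr (e13 A B D) T') := by rw [hT'd]; rfl
  have iBD : SBD ρ = vNEntropy (ptr (e23 A B D) T') := by rw [hT'd]; rfl
  have iD : SD ρ = vNEntropy (ptr (Equiv.prodComm A D) (ptr (e13 A B D) T')) := by rw [hT'd]; rfl
  have iABD : SABD ρ = vNEntropy T' := by rw [hT'd]; rfl
  have mAB : ptr (e12 A B D) T' = ptr (e12 A B C) T := by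
    rw [hTd, hT'd]
    ext p q
    exact Finset.sum_comm
  have mBC : ptr (e12 B C D) ω = ptr (e23 A B C) T := by
    rw [hTd, hωd]
    ext p q
    exact Finset.sum_comm
  have mBD : ptr (e13 B C D) ω = ptr (e23 A B D) T' := by
    rw [hT'd, hωd]
    ext p q
    exact Finset.sum_comm
  have iCD : SCD ρ = vNEntropy (ptr (e23 B C D) ω) := by
    rw [hωd, SCD]
    congr 1
    ext p q
    exact Finset.sum_comm
  have mD : ptr (Equiv.prodComm A D) (ptr (e13 A B D) T') =
      ptr (Equiv.prodComm C D) (ptr (e23 B C D) ω) := by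
    rw [ptr_snd_ptr13, ← mBD, ptr_snd_ptr13]
  rw [iAB, iBC, iB, iABC] at h1
  rw [iAC, iAB, iA, iABC, add_comm (vNEntropy (ptr (e13 A B C) T))] at h2
  rw [iAD, iBD, iD, iABD] at h3
  obtain ⟨V, lam, m, V', m', hV, hVs, hW, hWs, -, hB, hsl, hm, htr, hfun⟩ :=
    markov_structure hT h1 h2
  have hNpos : ∀ b, (m b * m b).PosSemidef := fun b => by
    have := posSemidef_conjTranspose_mul_self (m b)
    rwa [(hm b).eq] at this
  -- the labels are the distinct values of the blocks
  let J := {x : Matrix C C ℂ // x ∈ Finset.univ.image m}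
  have : Fintype J := Finset.Subtype.fintype _
  let mJ : B → J := fun b => ⟨m b, Finset.mem_image_of_mem m (Finset.mem_univ b)⟩
  have hJ : Nonempty J := by
    by_contra hcon
    have : IsEmpty B := ⟨fun b => hcon ⟨mJ b⟩⟩
    have h0 := hρ.2
    simp [Matrix.trace] at h0
  have horth := fun i j (hij : i ≠ j) => orthogonal_marginals (R := labelProj V mJ)
    (R' := fun j => V' * diagonal (fun a => if m' a = j.1 then 1 else 0) * V'ᴴ) hT' h3
    (labelProj_conjTranspose V mJ) (fun i j h => labelProj_mul hVs mJ h) (labelProj_sum hV mJ)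
    (fun j => by
      rw [mAB]
      have := hfun fun x => if x = j.1 then 1 else 0
      rw [← this, labelProj]
      congr 5
      funext b
      exact if_congr Subtype.ext_iff rfl rfl) hij
  have bound := cond_entropy_le (N := fun j : J => j.1 * j.1) hω hV hVs (lam := lam) (mJ := mJ)
    (fun j => by
      obtain ⟨b, -, hb⟩ := Finset.mem_image.1 j.2
      rw [← hb]
      exact hNpos b) htr (by rw [mBC]; exact hsl) (by rw [mBD]; exact horth)
  have blocks := vNEntropy_blocks hVs hNpos htr hsl
  rw [← hB] at blocks
  rw [iAB, iCD, iABC, iD, mD]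
  have hlog : 0 < Real.log 2 := Real.log_pos one_lt_two
  refine le_of_mul_le_mul_right ?_ hlog
  have e := congrArg (· * Real.log 2) h1
  simp only [zero_mul] at e
  linarith
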